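/- Assume M = C + R where rank(C) = r and the entries of R ∈ ℝ^{m×n} are i.i.d. N(0, σ²). Suppose r ≤ d ≤ m/4 and ln(2n/δ) ≤ m/64, and let Û ∈ ℝ^{m×r̂} (r̂ = min(r, rank(A))) consist of the top-r̂ left singular vectors of the matrix A formed from d uniformly sampled and rescaled columns of M. Then with probability at least 1 − δ, simultaneously for every column m_i of M not among the sampled columns, μ(P_{Û⊥} m_i) ≤ 3 r μ(r) + 24 ln(2mn/δ), where P_{Û⊥} = I − Û Û^T. -/

import Mathlib

/-!
The noise is invariant under every orthogonal `Q` acting on columns, and if `Q` fixes the range of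
`C` then `C + R ↦ Q (C + R)` only replaces the noise `R` by `Q R`. The residual
`x = (1 - U Uᵀ) m_j` is equivariant under such `Q`, since the span of the top singular vectors of
the sampled matrix is. Hence, conditionally on its length, the component of `x` orthogonal to the
range of `C` has a rotationally invariant direction, and its entries are about as small as those of
a random vector; the component in the range of `C` is controlled by the incoherence of `Ubar`
through Cauchy–Schwarz (`sq_le_of_frame`).

Only a finite group of rotations is needed. For a row `i` choose an orthonormal frame `F` of the
orthogonal complement of the range of `C` whose `i`-th row is flat, that is, has entries of size at
most `(m - r)^(-1/2)` (`exists_flat_frame`). Flipping the signs of the frame coordinates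
(`signFlip`) turns the `i`-th entry `∑ l, F i l * z l` of the orthogonal component into the
Rademacher sum `∑ l, ± F i l * z l` with variance at most `‖z‖² / (m - r)`, and Hoeffding's
inequality in counting form (`card_sign_sq_gt`) bounds the fraction of bad sign patterns. Averaging
over the flips (`measure_le_of_average`) bounds the probability of the bad event
(`gaussMeasure_badEvent_le`), and for each choice of the sampled indices a union bound over rows,
columns and the size of `U` finishes the proof.

The delicate point is that `U` is not a function of the matrix: the residual has to be the same
for all admissible choices of `U`, for almost every noise matrix. Top left singular vectors maximize
`‖Uᵀ A‖_F²` over orthonormal `U` (Ky Fan, `IsTopLeftSingular.isFrobMax`), so the maximal value is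
the square of a Lipschitz function of the noise. By Rademacher's theorem this function is
differentiable almost everywhere, and at such a point all maximizers have the same derivative
(`ae_inner_eq_of_max`); this derivative determines `A Aᵀ U Uᵀ`, and hence `U Uᵀ` because the
columns of `U` lie in the range of `A` (`proj_eq_of_trace`). For `σ = 0` the noise vanishes and `x`
stays in the range of `C`.
-/

open MeasureTheory Matrix

/-- Squared Euclidean norm of the `i`-th row of a matrix. -/
noncomputable def rowNormSq {m k : ℕ} (U : Matrix (Fin m) (Fin k) ℝ) (i : Fin m) : ℝ :=
  ∑ j, (U i j) ^ 2

/-- `U` and `V` consist of the top-`k` left and right singular vectors of `A`. -/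
def IsTopSVD {m n k : ℕ} (A : Matrix (Fin m) (Fin n) ℝ)
    (U : Matrix (Fin m) (Fin k) ℝ) (V : Matrix (Fin n) (Fin k) ℝ) : Prop :=
  ∃ (hkm : k ≤ m) (hkn : k ≤ n),
    ∃ (Uf : Matrix (Fin m) (Fin m) ℝ) (Vf : Matrix (Fin n) (Fin n) ℝ)
      (σ : Fin (min m n) → ℝ),
      Ufᵀ * Uf = 1 ∧ Vfᵀ * Vf = 1 ∧
      (∀ i j, i ≤ j → σ j ≤ σ i) ∧ (∀ i, 0 ≤ σ i) ∧
      A = Uf * (Matrix.of fun (i : Fin m) (j : Fin n) =>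
            if h : (i : ℕ) = (j : ℕ) ∧ (i : ℕ) < min m n then σ ⟨i, h.2⟩ else 0) * Vfᵀ ∧
      U = Uf.submatrix id (Fin.castLE hkm) ∧ V = Vf.submatrix id (Fin.castLE hkn)

/-- `U` consists of the top-`k` left singular vectors of `A`. -/
def IsTopLeftSingular {m n k : ℕ} (A : Matrix (Fin m) (Fin n) ℝ)
    (U : Matrix (Fin m) (Fin k) ℝ) : Prop :=
  ∃ V : Matrix (Fin n) (Fin k) ℝ, IsTopSVD A U V

/-- The incoherence `μ(r)` computed from top-`r` singular vector matrices `U`, `V`. -/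
noncomputable def incoh {m n r : ℕ} (U : Matrix (Fin m) (Fin r) ℝ)
    (V : Matrix (Fin n) (Fin r) ℝ) : ℝ :=
  max (⨆ i : Fin m, ((m : ℝ) / r) * rowNormSq U i)
      (⨆ i : Fin n, ((n : ℝ) / r) * rowNormSq V i)

/-- The incoherence `μ̂(r̂)` of a matrix with orthonormal columns. -/
noncomputable def incohU {m k : ℕ} (U : Matrix (Fin m) (Fin k) ℝ) : ℝ :=
  ⨆ i : Fin m, ((m : ℝ) / k) * rowNormSq U i

/-- Squared Frobenius norm. -/
noncomputable def frobSq {m n : ℕ} (A : Matrix (Fin m) (Fin n) ℝ) : ℝ :=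
  ∑ i, ∑ j, (A i j) ^ 2

/-- Frobenius norm. -/
noncomputable def frobNorm {m n : ℕ} (A : Matrix (Fin m) (Fin n) ℝ) : ℝ :=
  Real.sqrt (frobSq A)

/-- The column-based incoherence `μ(M) = n · max_j ‖m_j‖² / ‖M‖_F²`. -/
noncomputable def incohM {m n : ℕ} (M : Matrix (Fin m) (Fin n) ℝ) : ℝ :=
  (n : ℝ) * (⨆ j : Fin n, ∑ i, (M i j) ^ 2) / frobSq M

/-- Squared Frobenius-norm error `‖M - M_r‖_F²` of a best rank-`r` approximation of `M`. -/
noncomputable def rankApproxErrSq {m n : ℕ} (M : Matrix (Fin m) (Fin n) ℝ) (r : ℕ) : ℝ :=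
  sInf {x : ℝ | ∃ N : Matrix (Fin m) (Fin n) ℝ, N.rank ≤ r ∧ x = frobSq (M - N)}

/-- Smallest eigenvalue of a symmetric matrix, as the infimum of the Rayleigh quotient. -/
noncomputable def lambdaMin {k : ℕ} (B : Matrix (Fin k) (Fin k) ℝ) : ℝ :=
  ⨅ x : {x : Fin k → ℝ // ∑ j, (x j) ^ 2 = 1}, x.1 ⬝ᵥ B.mulVec x.1

/-- Spectral (operator) norm of a matrix. -/
noncomputable def specNorm {a b : ℕ} (B : Matrix (Fin a) (Fin b) ℝ) : ℝ :=
  ⨆ x : {x : Fin b → ℝ // ∑ j, (x j) ^ 2 = 1}, Real.sqrt (∑ i, (B.mulVec x.1 i) ^ 2)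

/-- The incoherence `μ(x) = m‖x‖_∞²/‖x‖₂²` of a vector. -/
noncomputable def vecIncoh {m : ℕ} (x : Fin m → ℝ) : ℝ :=
  (m : ℝ) * (⨆ i : Fin m, (x i) ^ 2) / (∑ i, (x i) ^ 2)

/-- The matrix `A` of sampled, rescaled columns: `A^{(j)} = M^{(c_j)}/√(d p_{c_j})`. -/
noncomputable def sampleA {m n : ℕ} (d : ℕ) (M : Matrix (Fin m) (Fin n) ℝ)
    (p : Fin n → ℝ) (c : Fin d → Fin n) : Matrix (Fin m) (Fin d) ℝ :=
  Matrix.of fun i j => M i (c j) / Real.sqrt (d * p (c j))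

/-- Recover a column from its observed entries: `Û(Û_Oᵀ Û_O)⁻¹ Û_Oᵀ v_O`. -/
noncomputable def recoverCol {m k s : ℕ} (U : Matrix (Fin m) (Fin k) ℝ)
    (O : Fin s → Fin m) (v : Fin m → ℝ) : Fin m → ℝ :=
  (U * ((U.submatrix O id)ᵀ * (U.submatrix O id))⁻¹ * (U.submatrix O id)ᵀ).mulVec
    (fun t => v (O t))

/-- The recovered matrix `M̂`: sampled columns are kept, the others are reconstructed. -/
noncomputable def recoverMat {m n d s k : ℕ} (M : Matrix (Fin m) (Fin n) ℝ)
    (c : Fin d → Fin n) (U : Matrix (Fin m) (Fin k) ℝ) (O : Fin n → Fin s → Fin m) :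
    Matrix (Fin m) (Fin n) ℝ :=
  Matrix.of fun i j =>
    if ∃ t, c t = j then M i j else recoverCol U (O j) (fun i' => M i' j) i

/-- The discrete measure on `Fin n` with weights `p`. -/
noncomputable def discMeasure {n : ℕ} (p : Fin n → ℝ) : Measure (Fin n) :=
  ∑ i, ENNReal.ofReal (p i) • Measure.dirac i

/-- The law of the randomness of Algorithm 1: `d` i.i.d. column indices with law `p`, and for
each column a set of `s` entry indices sampled i.i.d. uniformly from `[m]` with replacement. -/
noncomputable def algMeasure (m n d s : ℕ) (p : Fin n → ℝ) :
    Measure ((Fin d → Fin n) × (Fin n → Fin s → Fin m)) :=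
  (Measure.pi fun _ => discMeasure p).prod
    (Measure.pi fun _ => Measure.pi fun _ => discMeasure fun _ : Fin m => (m : ℝ)⁻¹)

/-- Law of a matrix with i.i.d. `N(0,σ²)` entries. -/
noncomputable def gaussMeasure (m n : ℕ) (σ : NNReal) : Measure (Fin m → Fin n → ℝ) :=
  Measure.pi fun _ => Measure.pi fun _ => ProbabilityTheory.gaussianReal 0 (σ ^ 2)

/-- Add a noise realization to a matrix. -/
def addNoise {m n : ℕ} (C : Matrix (Fin m) (Fin n) ℝ) (g : Fin m → Fin n → ℝ) :
    Matrix (Fin m) (Fin n) ℝ :=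
  C + Matrix.of g

/-! ### Top singular vectors as maximizers -/

/-- `U` has orthonormal columns and maximizes `‖UᵀA‖_F²` among all such matrices of the same size;
equivalently, its columns span an optimal `k`-dimensional approximation of the range of `A`. -/
def IsFrobMax {m d k : ℕ} (A : Matrix (Fin m) (Fin d) ℝ) (U : Matrix (Fin m) (Fin k) ℝ) : Prop :=
  Uᵀ * U = 1 ∧ ∀ U' : Matrix (Fin m) (Fin k) ℝ, U'ᵀ * U' = 1 → frobSq (U'ᵀ * A) ≤ frobSq (Uᵀ * A)

lemma frobSq_eq_trace {a b : ℕ} (X : Matrix (Fin a) (Fin b) ℝ) : frobSq X = (X * Xᵀ).trace := by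
  simp [frobSq, Matrix.trace, Matrix.mul_apply, pow_two]

lemma frobSq_nonneg {a b : ℕ} (X : Matrix (Fin a) (Fin b) ℝ) : 0 ≤ frobSq X :=
  Finset.sum_nonneg fun _ _ => Finset.sum_nonneg fun _ _ => sq_nonneg _

/-- Ky Fan's inequality for a nonincreasing diagonal: the weights `p i ∈ [0, 1]` with total mass `k`
maximizing `∑ i, s i * p i` are the indicators of the first `k` indices. -/
lemma sum_mul_le_of_antitone {m k : ℕ} (hk : k ≤ m) (s p : Fin m → ℝ)
    (hs : ∀ i j, i ≤ j → s j ≤ s i) (hp0 : ∀ i, 0 ≤ p i) (hp1 : ∀ i, p i ≤ 1)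
    (hp : ∑ i, p i = k) :
    ∑ i, s i * p i ≤ ∑ i : Fin m, s i * (if (i : ℕ) < k then 1 else 0) := by
  rcases Nat.eq_zero_or_pos k with rfl | hpos
  · have : ∀ i, p i = 0 := by
      have := (Finset.sum_eq_zero_iff_of_nonneg (fun i _ => hp0 i)).1 (by simpa using hp)
      exact fun i => this i (Finset.mem_univ i)
    simp [this]
  set t : Fin m := ⟨k - 1, by omega⟩ with ht
  have hcard : ∑ i : Fin m, (if (i : ℕ) < k then (1 : ℝ) else 0) = k := by
    rw [Finset.sum_boole]
    have : (Finset.univ.filter fun i : Fin m => (i : ℕ) < k).card = k := by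
      rw [← Fintype.card_subtype]
      simpa using Fintype.card_congr (Fin.castLEquiv hk).symm
    rw [this]
  have key : ∀ i : Fin m, (s i - s t) * (p i - (if (i : ℕ) < k then 1 else 0)) ≤ 0 := by
    intro i
    split_ifs with h
    · have : s t ≤ s i := hs i t (by rw [Fin.le_def]; simp [ht]; omega)
      exact mul_nonpos_of_nonneg_of_nonpos (by linarith) (by linarith [hp1 i])
    · have : s i ≤ s t := hs t i (by rw [Fin.le_def]; simp [ht]; omega)
      exact mul_nonpos_of_nonpos_of_nonneg (by linarith) (by linarith [hp0 i])
  have h1 := Finset.sum_nonpos (fun i (_ : i ∈ Finset.univ) => key i)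
  have h2 : ∑ i : Fin m, (s i - s t) * (p i - (if (i : ℕ) < k then 1 else 0))
      = (∑ i, s i * p i - ∑ i : Fin m, s i * (if (i : ℕ) < k then 1 else 0))
        - s t * (∑ i, p i - ∑ i : Fin m, (if (i : ℕ) < k then (1 : ℝ) else 0)) := by
    simp only [mul_sub, sub_mul, Finset.sum_sub_distrib, Finset.mul_sum]
    ring
  rw [h2, hp, hcard] at h1
  linarith

/-- Ky Fan's maximum principle: the top-`k` left singular vectors maximize `‖UᵀA‖_F²`. -/
lemma IsTopLeftSingular.isFrobMax {m d k : ℕ} {A : Matrix (Fin m) (Fin d) ℝ}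
    {U : Matrix (Fin m) (Fin k) ℝ} (h : IsTopLeftSingular A U) : IsFrobMax A U := by
  obtain ⟨V, hkm, hkn, Uf, Vf, σ, hU, hV, hmono, hpos, hA, hUU, -⟩ := h
  set S : Matrix (Fin m) (Fin d) ℝ := (Matrix.of fun (i : Fin m) (j : Fin d) =>
    if h : (i : ℕ) = (j : ℕ) ∧ (i : ℕ) < min m d then σ ⟨i, h.2⟩ else 0) with hS
  set s : Fin m → ℝ := fun i => if h : (i : ℕ) < min m d then σ ⟨i, h⟩ ^ 2 else 0 with hs
  have hSS : S * Sᵀ = Matrix.diagonal s := by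
    ext i j
    rw [Matrix.mul_apply, Matrix.diagonal_apply]
    simp only [hS, hs, Matrix.transpose_apply, Matrix.of_apply]
    by_cases hi : (i : ℕ) < min m d
    · have hid : (i : ℕ) < d := by omega
      rw [Finset.sum_eq_single (⟨i, hid⟩ : Fin d)]
      · by_cases hij : i = j
        · subst hij; simp [hi, pow_two]
        · have : ¬ ((j : ℕ) = (i : ℕ)) := fun h => hij (Fin.ext h.symm)
          simp [this, hij]
      · intro b _ hb
        have : ¬ ((i : ℕ) = (b : ℕ)) := fun h => hb (Fin.ext h.symm)
        simp [this]
      · simp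
    · simp [hi]
  have hAA : A * Aᵀ = Uf * Matrix.diagonal s * Ufᵀ := by
    rw [hA, ← hSS]
    simp only [Matrix.transpose_mul, Matrix.transpose_transpose, Matrix.mul_assoc]
    rw [← Matrix.mul_assoc Vfᵀ Vf, hV, Matrix.one_mul]
  have hUf' : Uf * Ufᵀ = 1 := mul_eq_one_comm.1 hU
  -- In the coordinates `T = Ufᵀ W` the objective only sees the squared row norms of `T`.
  have hobj : ∀ W : Matrix (Fin m) (Fin k) ℝ,
      frobSq (Wᵀ * A) = ∑ i, s i * ∑ a, ((Ufᵀ * W) i a) ^ 2 := by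
    intro W
    have : (Wᵀ * A) * (Wᵀ * A)ᵀ = (Ufᵀ * W)ᵀ * (Matrix.diagonal s * (Ufᵀ * W)) := by
      have : (Wᵀ * A) * (Wᵀ * A)ᵀ = Wᵀ * (A * Aᵀ) * W := by
        simp only [Matrix.transpose_mul, Matrix.transpose_transpose, Matrix.mul_assoc]
      rw [this, hAA]
      simp only [Matrix.transpose_mul, Matrix.transpose_transpose, Matrix.mul_assoc]
    rw [frobSq_eq_trace, this, Matrix.trace]
    simp only [Matrix.diag_apply, Matrix.mul_apply (M := (Ufᵀ * W)ᵀ), Matrix.diagonal_mul,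
      Matrix.transpose_apply (Ufᵀ * W)]
    rw [Finset.sum_comm]
    refine Finset.sum_congr rfl fun i _ => ?_
    rw [Finset.mul_sum]
    exact Finset.sum_congr rfl fun a _ => by ring
  have hT : ∀ W : Matrix (Fin m) (Fin k) ℝ, Wᵀ * W = 1 → (Ufᵀ * W)ᵀ * (Ufᵀ * W) = 1 := by
    intro W hW
    rw [Matrix.transpose_mul, Matrix.transpose_transpose, Matrix.mul_assoc, ← Matrix.mul_assoc Uf,
      hUf', Matrix.one_mul, hW]
  have hTU : Ufᵀ * U = Matrix.of fun (i : Fin m) (a : Fin k) => if (i : ℕ) = a then 1 else 0 := by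
    ext i a
    have := congrFun (congrFun hU i) (Fin.castLE hkm a)
    rw [Matrix.one_apply, Matrix.mul_apply] at this
    rw [Matrix.mul_apply, hUU]
    simp only [Matrix.submatrix_apply, id, Matrix.of_apply]
    rw [this]
    simp [Fin.ext_iff]
  have hUU1 : Uᵀ * U = 1 := by
    ext a b
    have := congrFun (congrFun hU (Fin.castLE hkm a)) (Fin.castLE hkm b)
    rw [Matrix.one_apply, Matrix.mul_apply] at this
    rw [Matrix.mul_apply, hUU, Matrix.one_apply]
    simp only [Matrix.submatrix_apply, id, Matrix.transpose_apply] at this ⊢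
    rw [this]
    simp [Fin.ext_iff]
  refine ⟨hUU1, fun W hW => ?_⟩
  rw [hobj, hobj]
  have hpU : ∀ i : Fin m, ∑ a, ((Ufᵀ * U) i a) ^ 2 = if (i : ℕ) < k then 1 else 0 := by
    intro i
    rw [hTU]
    simp only [Matrix.of_apply]
    split_ifs with h
    · rw [Finset.sum_eq_single (⟨i, h⟩ : Fin k)]
      · simp
      · intro b _ hb
        have : ¬ ((i : ℕ) = (b : ℕ)) := fun h => hb (Fin.ext h.symm)
        simp [this]
      · simp
    · refine Finset.sum_eq_zero fun a _ => ?_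
      have : ¬ ((i : ℕ) = (a : ℕ)) := by omega
      simp [this]
  simp only [hpU]
  set T := Ufᵀ * W with hTdef
  have hTT : Tᵀ * T = 1 := hT W hW
  refine sum_mul_le_of_antitone hkm s _ ?_ (fun i => Finset.sum_nonneg fun _ _ => sq_nonneg _) ?_ ?_
  · intro i j hij
    have hij' : (i : ℕ) ≤ j := hij
    simp only [hs]
    by_cases hj : (j : ℕ) < min m d
    · have hi : (i : ℕ) < min m d := lt_of_le_of_lt hij' hj
      simp only [hj, hi, dif_pos]
      exact pow_le_pow_left₀ (hpos _) (hmono _ _ hij') 2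
    · simp only [hj, dif_neg, not_false_eq_true]
      split_ifs
      · positivity
      · exact le_rfl
  · intro i
    -- `T Tᵀ` is a symmetric idempotent, so its diagonal entry `p` satisfies `p² ≤ p`.
    have hidem : (T * Tᵀ) * (T * Tᵀ) = T * Tᵀ := by
      rw [Matrix.mul_assoc, ← Matrix.mul_assoc Tᵀ, hTT, Matrix.one_mul]
    have hd : (T * Tᵀ) i i = ∑ a, (T i a) ^ 2 := by
      simp [Matrix.mul_apply, pow_two]
    have hsym : ∀ l, (T * Tᵀ) l i = (T * Tᵀ) i l := by
      intro l; simp [Matrix.mul_apply, mul_comm]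
    have h1 : ∑ l, ((T * Tᵀ) i l) ^ 2 = (T * Tᵀ) i i := by
      conv_rhs => rw [← hidem]
      rw [Matrix.mul_apply]
      exact Finset.sum_congr rfl fun l _ => by rw [hsym, pow_two]
    have h2 : ((T * Tᵀ) i i) ^ 2 ≤ (T * Tᵀ) i i := by
      rw [← h1]
      have := Finset.single_le_sum (f := fun l => ((T * Tᵀ) i l) ^ 2)
        (fun l _ => sq_nonneg _) (Finset.mem_univ i)
      rw [h1] at this
      simpa [h1] using this
    rw [← hd]
    nlinarith
  · have := congrArg Matrix.trace hTT
    rw [Matrix.trace_one, Fintype.card_fin] at this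
    rw [← this, Finset.sum_comm]
    simp [Matrix.trace, Matrix.mul_apply, pow_two]

/-- If the first `k` singular values are positive then the first `k` left singular vectors lie in
the range of the matrix. -/
lemma exists_eq_mul_of_pos {m d k : ℕ} {A : Matrix (Fin m) (Fin d) ℝ} (hkm : k ≤ m) (hkd : k ≤ d)
    {Uf : Matrix (Fin m) (Fin m) ℝ} {Vf : Matrix (Fin d) (Fin d) ℝ} {σ : Fin (min m d) → ℝ}
    (hV : Vfᵀ * Vf = 1)
    (hA : A = Uf * (Matrix.of fun (i : Fin m) (j : Fin d) =>
            if h : (i : ℕ) = (j : ℕ) ∧ (i : ℕ) < min m d then σ ⟨i, h.2⟩ else 0) * Vfᵀ)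
    (hpos : ∀ i : Fin (min m d), (i : ℕ) < k → 0 < σ i) :
    ∃ B : Matrix (Fin d) (Fin k) ℝ, Uf.submatrix id (Fin.castLE hkm) = A * B := by
  have hlt : ∀ a : Fin k, (a : ℕ) < min m d := fun a => by have := a.2; omega
  refine ⟨Matrix.of fun j a => Vf j (Fin.castLE hkd a) * (σ ⟨a, hlt a⟩)⁻¹, ?_⟩
  set S : Matrix (Fin m) (Fin d) ℝ := (Matrix.of fun (i : Fin m) (j : Fin d) =>
    if h : (i : ℕ) = (j : ℕ) ∧ (i : ℕ) < min m d then σ ⟨i, h.2⟩ else 0) with hS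
  have h1 : (Vfᵀ * (Matrix.of fun j (a : Fin k) => Vf j (Fin.castLE hkd a) * (σ ⟨a, hlt a⟩)⁻¹) :
      Matrix (Fin d) (Fin k) ℝ)
      = Matrix.of fun (j : Fin d) (a : Fin k) => if (j : ℕ) = a then (σ ⟨a, hlt a⟩)⁻¹ else 0 := by
    ext j a
    have := congrFun (congrFun hV j) (Fin.castLE hkd a)
    rw [Matrix.one_apply, Matrix.mul_apply] at this
    rw [Matrix.mul_apply]
    simp only [Matrix.of_apply, ← mul_assoc]
    rw [← Finset.sum_mul, this]
    simp [Fin.ext_iff]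
  have h2 : S * (Matrix.of fun (j : Fin d) (a : Fin k) =>
      if (j : ℕ) = a then (σ ⟨a, hlt a⟩)⁻¹ else 0)
      = Matrix.of fun (i : Fin m) (a : Fin k) => if (i : ℕ) = a then (1 : ℝ) else 0 := by
    ext i a
    rw [Matrix.mul_apply, Finset.sum_eq_single (Fin.castLE hkd a)]
    · simp only [hS, Matrix.of_apply, Fin.val_castLE, if_true]
      by_cases hia : (i : ℕ) = a
      · have hne : σ ⟨a, hlt a⟩ ≠ 0 := (hpos ⟨a, hlt a⟩ a.2).ne'
        have hl := hlt a
        have e : (⟨i, by omega⟩ : Fin (min m d)) = ⟨a, hlt a⟩ := Fin.ext hia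
        simp only [hia, hl, and_self, dif_pos, if_true]
        exact mul_inv_cancel₀ hne
      · simp [hia]
    · intro b _ hb
      have : ¬ ((b : ℕ) = (a : ℕ)) := fun h => hb (Fin.ext h)
      simp [this]
    · simp
  rw [hA, Matrix.mul_assoc, h1, Matrix.mul_assoc, h2]
  ext i a
  rw [Matrix.mul_apply, Finset.sum_eq_single (Fin.castLE hkm a)]
  · simp
  · intro b _ hb
    have : ¬ ((b : ℕ) = (a : ℕ)) := fun h => hb (Fin.ext h)
    simp [this]
  · simp

/-- The first `rank A` singular values are positive. -/
lemma pos_of_lt_rank {m d : ℕ} {A : Matrix (Fin m) (Fin d) ℝ}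
    {Uf : Matrix (Fin m) (Fin m) ℝ} {Vf : Matrix (Fin d) (Fin d) ℝ} {σ : Fin (min m d) → ℝ}
    (hmono : ∀ i j, i ≤ j → σ j ≤ σ i) (h0 : ∀ i, 0 ≤ σ i)
    (hA : A = Uf * (Matrix.of fun (i : Fin m) (j : Fin d) =>
            if h : (i : ℕ) = (j : ℕ) ∧ (i : ℕ) < min m d then σ ⟨i, h.2⟩ else 0) * Vfᵀ)
    (i : Fin (min m d)) (hi : (i : ℕ) < A.rank) : 0 < σ i := by
  by_contra hcon
  have hz : ∀ j, i ≤ j → σ j = 0 := fun j hj =>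
    le_antisymm ((hmono i j hj).trans (not_lt.1 hcon)) (h0 j)
  set S : Matrix (Fin m) (Fin d) ℝ := (Matrix.of fun (i : Fin m) (j : Fin d) =>
    if h : (i : ℕ) = (j : ℕ) ∧ (i : ℕ) < min m d then σ ⟨i, h.2⟩ else 0) with hS
  -- `S` factors through its first `i` rows, so that `rank A ≤ rank S ≤ i`.
  have hfac : S = (Matrix.of fun (a : Fin m) (b : Fin i) => if (a : ℕ) = b then (1 : ℝ) else 0) *
      (S.submatrix (Fin.castLE (by omega : (i : ℕ) ≤ m)) id) := by
    ext a j
    rw [Matrix.mul_apply]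
    by_cases ha : (a : ℕ) < i
    · rw [Finset.sum_eq_single (⟨a, ha⟩ : Fin i)]
      · simp
      · intro b _ hb
        have : ¬ ((a : ℕ) = (b : ℕ)) := fun h => hb (Fin.ext h.symm)
        simp [this]
      · simp
    · rw [Finset.sum_eq_zero]
      · simp only [hS, Matrix.of_apply]
        split_ifs with h
        · exact hz _ (by rw [Fin.le_def]; simp; omega)
        · rfl
      · intro b _
        have : ¬ ((a : ℕ) = (b : ℕ)) := by omega
        simp [this]
  have : A.rank ≤ i := by
    rw [hA, hfac]
    refine (Matrix.rank_mul_le_left _ _).trans ((Matrix.rank_mul_le_right _ _).trans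
      ((Matrix.rank_mul_le_left _ _).trans ((Matrix.rank_le_card_width _).trans (by simp))))
  omega

lemma IsTopLeftSingular.exists_eq_mul {m d k : ℕ} {A : Matrix (Fin m) (Fin d) ℝ}
    {U : Matrix (Fin m) (Fin k) ℝ} (h : IsTopLeftSingular A U) (hk : k ≤ A.rank) :
    ∃ B : Matrix (Fin d) (Fin k) ℝ, U = A * B := by
  obtain ⟨V, hkm, hkn, Uf, Vf, σ, hU, hV, hmono, hpos, hA, hUU, -⟩ := h
  rw [hUU]
  exact exists_eq_mul_of_pos hkm hkn hV hA fun i hi =>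
    pos_of_lt_rank hmono hpos hA i (lt_of_lt_of_le hi hk)

/-! ### Flat orthonormal frames -/

/-- Right multiplication by a Householder reflection sends any row vector to one of the same length
with all entries of equal size. -/
lemma exists_orthogonal_flat {D : ℕ} (p : Fin D → ℝ) :
    ∃ H : Matrix (Fin D) (Fin D) ℝ, Hᵀ * H = 1 ∧ ∀ k, (p ᵥ* H) k ^ 2 * D = p ⬝ᵥ p := by
  rcases Nat.eq_zero_or_pos D with rfl | hD
  · exact ⟨1, by simp, fun k => k.elim0⟩
  have hD' : (0 : ℝ) < D := by exact_mod_cast hD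
  have hpp : 0 ≤ p ⬝ᵥ p := Finset.sum_nonneg fun i _ => mul_self_nonneg _
  set q : Fin D → ℝ := fun _ => Real.sqrt (p ⬝ᵥ p / D) with hq
  have hqsq : ∀ k, q k ^ 2 * D = p ⬝ᵥ p := fun k => by
    rw [hq]; simp only []; rw [Real.sq_sqrt (by positivity)]; field_simp
  have hqq : q ⬝ᵥ q = p ⬝ᵥ p := by
    have : q ⬝ᵥ q = q ⟨0, hD⟩ ^ 2 * D := by
      simp only [dotProduct, hq, Finset.sum_const, Finset.card_univ, Fintype.card_fin, nsmul_eq_mul]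
      ring
    exact this.trans (hqsq ⟨0, hD⟩)
  set v := p - q with hv
  have hvv : v ⬝ᵥ v = 2 * (p ⬝ᵥ v) := by
    rw [hv]
    simp only [sub_dotProduct, dotProduct_sub]
    rw [hqq, dotProduct_comm q p]; ring
  by_cases hz : v ⬝ᵥ v = 0
  · have : v = 0 := dotProduct_self_eq_zero.1 hz
    have hpq : p = q := sub_eq_zero.1 this
    refine ⟨1, by simp, fun k => ?_⟩
    rw [Matrix.vecMul_one]
    conv_lhs => rw [hpq]
    exact hqsq k
  · set H : Matrix (Fin D) (Fin D) ℝ := 1 - (2 / (v ⬝ᵥ v)) • Matrix.vecMulVec v v with hH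
    have hHt : Hᵀ = H := by
      rw [hH, Matrix.transpose_sub, Matrix.transpose_one, Matrix.transpose_smul,
        Matrix.transpose_vecMulVec]
    refine ⟨H, ?_, fun k => ?_⟩
    · rw [hHt, hH]
      have : Matrix.vecMulVec v v * Matrix.vecMulVec v v = (v ⬝ᵥ v) • Matrix.vecMulVec v v := by
        rw [Matrix.vecMulVec_mul_vecMulVec]
        ext i j
        simp [Matrix.vecMulVec_apply]
        ring
      simp only [sub_mul, mul_sub, one_mul, mul_one, smul_mul_assoc, mul_smul_comm, this, smul_smul]
      rw [div_mul_cancel₀ _ hz, smul_sub, two_smul, smul_add]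
      abel
    · have : p ᵥ* H = q := by
        rw [hH, Matrix.vecMul_sub, Matrix.vecMul_one, Matrix.vecMul_smul, Matrix.vecMul_vecMulVec,
          smul_smul]
        have e : 2 / (v ⬝ᵥ v) * (p ⬝ᵥ v) = 1 := by
          have hz' : p ⬝ᵥ v ≠ 0 := fun h => hz (by rw [hvv, h, mul_zero])
          rw [hvv]
          field_simp
        rw [mul_comm] at e
        rw [mul_comm, e, one_smul, hv]
        abel
      rw [this]
      exact hqsq k

/-- An orthonormal frame `F` of the orthogonal complement of the range of `C` in which the `i`-th
standard basis vector has coordinates of equal size. -/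
lemma exists_flat_frame {m n r : ℕ} {C : Matrix (Fin m) (Fin n) ℝ} (hrank : C.rank = r)
    {U : Matrix (Fin m) (Fin r) ℝ} {V : Matrix (Fin n) (Fin r) ℝ} (h : IsTopSVD C U V)
    (i : Fin m) :
    ∃ F : Matrix (Fin m) (Fin (m - r)) ℝ, Fᵀ * F = 1 ∧ F * Fᵀ + U * Uᵀ = 1 ∧ Fᵀ * C = 0 ∧
      ∀ k, F i k ^ 2 * (m - r : ℕ) ≤ 1 := by
  obtain ⟨hrm, hrn, Uf, Vf, σ, hU, hV, hmono, hpos, hA, hUU, -⟩ := h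
  have hUf' : Uf * Ufᵀ = 1 := mul_eq_one_comm.1 hU
  -- A positive singular value of index `≥ r` would force `rank C ≥ r + 1`.
  have hzero : ∀ a : Fin (min m n), r ≤ a → σ a = 0 := by
    intro a ha
    by_contra hne
    have hp : 0 < σ a := lt_of_le_of_ne (hpos a) (Ne.symm hne)
    have ham : r + 1 ≤ m := by have := a.2; omega
    have han : r + 1 ≤ n := by have := a.2; omega
    obtain ⟨B, hB⟩ := exists_eq_mul_of_pos (k := r + 1) ham han hV hA fun b hb =>
      lt_of_lt_of_le hp (hmono b a (by rw [Fin.le_def]; omega))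
    have h1 : (Uf.submatrix id (Fin.castLE ham))ᵀ * Uf.submatrix id (Fin.castLE ham) = 1 := by
      ext x y
      have := congrFun (congrFun hU (Fin.castLE ham x)) (Fin.castLE ham y)
      rw [Matrix.one_apply, Matrix.mul_apply] at this
      rw [Matrix.mul_apply, Matrix.one_apply]
      simp only [Matrix.submatrix_apply, id, Matrix.transpose_apply] at this ⊢
      rw [this]
      simp [Fin.ext_iff]
    have h2 : r + 1 ≤ C.rank := by
      calc r + 1 = (1 : Matrix (Fin (r + 1)) (Fin (r + 1)) ℝ).rank := by
            rw [Matrix.rank_one]; simp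
        _ ≤ (Uf.submatrix id (Fin.castLE ham)).rank := by
            rw [← h1]; exact Matrix.rank_mul_le_right _ _
        _ ≤ C.rank := by rw [hB]; exact Matrix.rank_mul_le_left _ _
    omega
  set tl : Fin (m - r) → Fin m := fun k => ⟨r + k, by have := k.2; omega⟩ with htl
  have htlinj : ∀ x y, tl x = tl y ↔ x = y := fun x y => by simp [htl, Fin.ext_iff]
  set F0 : Matrix (Fin m) (Fin (m - r)) ℝ := Uf.submatrix id tl with hF0
  have h1 : F0ᵀ * F0 = 1 := by
    ext x y
    have := congrFun (congrFun hU (tl x)) (tl y)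
    rw [Matrix.one_apply, Matrix.mul_apply] at this
    rw [Matrix.mul_apply, Matrix.one_apply]
    simp only [hF0, Matrix.submatrix_apply, id, Matrix.transpose_apply] at this ⊢
    rw [this]
    simp [htlinj]
  have h2 : F0 * F0ᵀ + U * Uᵀ = 1 := by
    ext x y
    rw [← hUf', Matrix.add_apply, Matrix.mul_apply, Matrix.mul_apply, Matrix.mul_apply, hUU]
    simp only [hF0, Matrix.submatrix_apply, id, Matrix.transpose_apply]
    obtain ⟨e, rfl⟩ := Nat.exists_eq_add_of_le hrm
    rw [Fin.sum_univ_add (fun l : Fin (r + e) => Uf x l * Uf y l), add_comm]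
    congr 1
    refine Fintype.sum_equiv (finCongr (by omega)) _ _ fun k => ?_
    have : tl k = Fin.natAdd r (finCongr (by omega) k) := by simp [htl, Fin.ext_iff]
    rw [this]
  have h3 : F0ᵀ * C = 0 := by
    set S : Matrix (Fin m) (Fin n) ℝ := (Matrix.of fun (i : Fin m) (j : Fin n) =>
      if h : (i : ℕ) = (j : ℕ) ∧ (i : ℕ) < min m n then σ ⟨i, h.2⟩ else 0) with hS
    have e1 : F0ᵀ * Uf = Matrix.of fun k l => if tl k = l then (1 : ℝ) else 0 := by
      ext k l
      have := congrFun (congrFun hU (tl k)) l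
      rw [Matrix.one_apply, Matrix.mul_apply] at this
      rw [Matrix.mul_apply]
      simpa [hF0] using this
    have e2 : F0ᵀ * Uf * S = 0 := by
      rw [e1]
      ext k j
      rw [Matrix.mul_apply]
      simp only [Matrix.of_apply, ite_mul, one_mul, zero_mul, Finset.sum_ite_eq, Finset.mem_univ,
        if_true, Matrix.zero_apply, hS]
      split_ifs with h
      · exact hzero _ (by simp [htl])
      · rfl
    rw [hA, Matrix.mul_assoc, ← Matrix.mul_assoc, ← Matrix.mul_assoc, e2, Matrix.zero_mul]
  obtain ⟨H, hH, hflat⟩ := exists_orthogonal_flat (fun k => F0 i k)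
  have hH' : H * Hᵀ = 1 := mul_eq_one_comm.1 hH
  refine ⟨F0 * H, ?_, ?_, ?_, fun k => ?_⟩
  · rw [Matrix.transpose_mul, Matrix.mul_assoc, ← Matrix.mul_assoc F0ᵀ, h1, Matrix.one_mul, hH]
  · rw [Matrix.transpose_mul, Matrix.mul_assoc, ← Matrix.mul_assoc H, hH', Matrix.one_mul, h2]
  · rw [Matrix.transpose_mul, Matrix.mul_assoc, h3, Matrix.mul_zero]
  · have e : (F0 * H) i k = ((fun k => F0 i k) ᵥ* H) k := by
      simp [Matrix.mul_apply, Matrix.vecMul, dotProduct]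
    rw [e, hflat]
    have := congrFun (congrFun h2 i) i
    rw [Matrix.add_apply, Matrix.one_apply_eq] at this
    have e1 : (F0 * F0ᵀ) i i = (fun k => F0 i k) ⬝ᵥ (fun k => F0 i k) := by
      simp [Matrix.mul_apply, dotProduct]
    have e2 : 0 ≤ (U * Uᵀ) i i := by
      rw [Matrix.mul_apply]
      exact Finset.sum_nonneg fun _ _ => by simpa using mul_self_nonneg _
    rw [← e1]; linarith

/-! ### Uniqueness of maximizers at points of differentiability -/

/-- Envelope argument: at a point where the Lipschitz function `x ↦ sup_i ‖L i (a + x)‖` is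
differentiable, all maximizers `i` give `x ↦ ‖L i (a + x)‖²` the same derivative. By Rademacher's
theorem almost every point is of this kind. -/
lemma ae_inner_eq_of_max {E β ι : Type*} [NormedAddCommGroup E] [NormedSpace ℝ E]
    [FiniteDimensional ℝ E] [MeasurableSpace E] [BorelSpace E] [Fintype β]
    (μ : Measure E) [μ.IsAddHaarMeasure] (L : ι → E →ₗ[ℝ] (β → ℝ)) (K : ℝ)
    (hK : ∀ i x b, |L i x b| ≤ K * ‖x‖) (a : E) :
    ∀ᵐ x ∂μ, ∀ i j : ι,
      (∀ l, ∑ b, (L l (a + x) b) ^ 2 ≤ ∑ b, (L i (a + x) b) ^ 2) →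
      (∀ l, ∑ b, (L l (a + x) b) ^ 2 ≤ ∑ b, (L j (a + x) b) ^ 2) →
      ∀ h, ∑ b, L i (a + x) b * L i h b = ∑ b, L j (a + x) b * L j h b := by
  classical
  rcases isEmpty_or_nonempty ι with hι | hι
  · exact Filter.Eventually.of_forall fun x i => (hι.false i).elim
  set N : ι → E → ℝ := fun i x => ‖(WithLp.toLp 2 (L i x) : EuclideanSpace ℝ β)‖ with hN
  have hNsq : ∀ i x, N i x ^ 2 = ∑ b, (L i x b) ^ 2 := fun i x => by
    simp [hN, EuclideanSpace.norm_sq_eq]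
  have hN0 : ∀ i x, 0 ≤ N i x := fun i x => norm_nonneg _
  set K' : ℝ := Real.sqrt (∑ _b : β, K ^ 2) with hK'
  have hbd : ∀ i x, N i x ≤ K' * ‖x‖ := by
    intro i x
    refine abs_le_of_sq_le_sq' ?_ (by positivity) |>.2
    rw [hNsq, mul_pow, hK', Real.sq_sqrt (by positivity), Finset.sum_mul]
    refine Finset.sum_le_sum fun b _ => ?_
    rw [← mul_pow, ← sq_abs]
    exact pow_le_pow_left₀ (abs_nonneg _) (hK i x b) 2
  have htri : ∀ i x y, N i x ≤ N i y + N i (x - y) := by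
    intro i x y
    have : (WithLp.toLp 2 (L i x) : EuclideanSpace ℝ β)
        = WithLp.toLp 2 (L i y) + WithLp.toLp 2 (L i (x - y)) := by
      rw [← WithLp.toLp_add, ← map_add]; simp
    simp only [hN]; rw [this]; exact norm_add_le _ _
  set g : E → ℝ := fun x => ⨆ i, N i (a + x) with hg
  have hbdd : ∀ x, BddAbove (Set.range fun i => N i x) := fun x =>
    ⟨K' * ‖x‖, by rintro _ ⟨i, rfl⟩; exact hbd i x⟩
  have hlip : LipschitzWith (Real.toNNReal K') g := by
    refine LipschitzWith.of_le_add_mul _ fun x y => ?_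
    rw [Real.coe_toNNReal _ (Real.sqrt_nonneg _)]
    refine ciSup_le fun i => ?_
    have h1 := htri i (a + x) (a + y)
    have h2 := hbd i (a + x - (a + y))
    have h3 : N i (a + y) ≤ g y := le_ciSup (hbdd (a + y)) i
    rw [add_sub_add_left_eq_sub, ← dist_eq_norm] at h2
    rw [add_sub_add_left_eq_sub] at h1
    linarith
  filter_upwards [hlip.ae_differentiableAt (μ := μ)] with x hx i j hi hj h
  -- both sides are half the derivative of `t ↦ g (x + t h) ^ 2` at `0`
  have hline : HasDerivAt (fun t : ℝ => x + t • h) h 0 := by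
    simpa using ((hasDerivAt_id (0 : ℝ)).smul_const h).const_add x
  have hgx : HasFDerivAt g (fderiv ℝ g x) (x + (0 : ℝ) • h) := by simpa using hx.hasFDerivAt
  have hg1 : HasDerivAt (fun t : ℝ => g (x + t • h)) (fderiv ℝ g x h) 0 :=
    HasFDerivAt.comp_hasDerivAt (f := fun t : ℝ => x + t • h) (0 : ℝ) hgx hline
  have hg2 := hg1.pow 2
  suffices key : ∀ i, (∀ l, ∑ b, (L l (a + x) b) ^ 2 ≤ ∑ b, (L i (a + x) b) ^ 2) →
      2 * ∑ b, L i (a + x) b * L i h b = 2 * g x * fderiv ℝ g x h by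
    have h1 := key i hi
    have h2 := key j hj
    linarith
  intro i hi
  have hgi : g x = N i (a + x) := by
    refine le_antisymm (ciSup_le fun l => ?_) (le_ciSup (hbdd (a + x)) i)
    refine abs_le_of_sq_le_sq' ?_ (hN0 _ _) |>.2
    rw [hNsq, hNsq]; exact hi l
  have hq : HasDerivAt (fun t : ℝ => ∑ b, (L i (a + x) b + t * L i h b) ^ 2)
      (2 * ∑ b, L i (a + x) b * L i h b) 0 := by
    rw [Finset.mul_sum]
    refine HasDerivAt.fun_sum fun b _ => ?_
    have := (((hasDerivAt_id (0 : ℝ)).mul_const (L i h b)).const_add (L i (a + x) b)).fun_pow 2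
    refine this.congr_deriv ?_
    norm_num
    ring
  have hmin : IsLocalMin (fun t : ℝ => g (x + t • h) ^ 2
      - ∑ b, (L i (a + x) b + t * L i h b) ^ 2) 0 := by
    refine Filter.Eventually.of_forall fun t => ?_
    have e1 : ∀ t : ℝ, ∑ b, (L i (a + x) b + t * L i h b) ^ 2 = N i (a + (x + t • h)) ^ 2 := by
      intro t
      rw [hNsq, ← add_assoc, map_add _ (a + x), map_smul]
      simp
    have e2 : N i (a + (x + t • h)) ^ 2 ≤ g (x + t • h) ^ 2 :=
      pow_le_pow_left₀ (hN0 _ _) (le_ciSup (hbdd (a + (x + t • h))) i) 2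
    have e3 := e1 t
    have e4 := e1 0
    simp only [zero_smul, add_zero] at e4
    simp only [zero_smul, add_zero, hgi, e3, e4]
    linarith
  have := hmin.hasDerivAt_eq_zero (hg2.sub hq)
  simp only [zero_smul, add_zero] at this
  norm_num at this
  simp only [← Pi.add_apply, ← map_add] at this
  linarith

/-- The orthogonal projection `U Uᵀ` onto the span of a maximizer contained in the range of `A` is
determined by first-order information. -/
lemma proj_eq_of_trace {m d k : ℕ} {A : Matrix (Fin m) (Fin d) ℝ}
    {U U' : Matrix (Fin m) (Fin k) ℝ} (hU : Uᵀ * U = 1) (hU' : U'ᵀ * U' = 1)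
    {B B' : Matrix (Fin d) (Fin k) ℝ} (hB : U = A * B) (hB' : U' = A * B')
    (h : ∀ X : Matrix (Fin m) (Fin m) ℝ,
      ((Uᵀ * A)ᵀ * (Uᵀ * (X * A))).trace = ((U'ᵀ * A)ᵀ * (U'ᵀ * (X * A))).trace) :
    U * Uᵀ = U' * U'ᵀ := by
  set Δ := U * Uᵀ - U' * U'ᵀ with hΔ
  have hΔt : Δᵀ = Δ := by simp [hΔ, Matrix.transpose_mul]
  have e : ∀ (W : Matrix (Fin m) (Fin k) ℝ) (X : Matrix (Fin m) (Fin m) ℝ),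
      ((Wᵀ * A)ᵀ * (Wᵀ * (X * A))).trace = (X * (A * Aᵀ * (W * Wᵀ))).trace := by
    intro W X
    have : (Wᵀ * A)ᵀ * (Wᵀ * (X * A)) = (Aᵀ * (W * Wᵀ)) * (X * A) := by
      simp only [Matrix.transpose_mul, Matrix.transpose_transpose, Matrix.mul_assoc]
    rw [this, Matrix.trace_mul_comm]
    simp only [Matrix.mul_assoc]
  have h0 : A * Aᵀ * Δ = 0 := by
    have := h (A * Aᵀ * Δ)ᵀ
    rw [e, e, ← sub_eq_zero, ← Matrix.trace_sub, ← Matrix.mul_sub, ← Matrix.mul_sub] at this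
    exact (Matrix.trace_conjTranspose_mul_self_eq_zero_iff (A := A * Aᵀ * Δ)).1
      (by rwa [Matrix.conjTranspose_eq_transpose_of_trivial])
  have h1 : Aᵀ * Δ = 0 := by
    have := (Matrix.self_mul_conjTranspose_mul_eq_zero A Δ).1
      (by rwa [Matrix.conjTranspose_eq_transpose_of_trivial])
    rwa [Matrix.conjTranspose_eq_transpose_of_trivial] at this
  have h2 : Δ * A = 0 := by
    have := congrArg Matrix.transpose h1
    rwa [Matrix.transpose_mul, Matrix.transpose_transpose, hΔt, Matrix.transpose_zero] at this
  have h3 : Δ * U = 0 := by rw [hB, ← Matrix.mul_assoc, h2, Matrix.zero_mul]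
  have h4 : Δ * U' = 0 := by rw [hB', ← Matrix.mul_assoc, h2, Matrix.zero_mul]
  have h5 : U = U' * (U'ᵀ * U) := by
    rw [hΔ, Matrix.sub_mul, Matrix.mul_assoc, hU, Matrix.mul_one, Matrix.mul_assoc,
      sub_eq_zero] at h3
    exact h3
  have h6 : U * (Uᵀ * U') = U' := by
    rw [hΔ, Matrix.sub_mul, Matrix.mul_assoc, Matrix.mul_assoc U', hU', Matrix.mul_one,
      sub_eq_zero] at h4
    exact h4
  have h7 : U * Uᵀ = U' * U'ᵀ * (U * Uᵀ) := by
    rw [← Matrix.mul_assoc, Matrix.mul_assoc U', ← h5]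
  have h8 : U' * U'ᵀ = U * Uᵀ * (U' * U'ᵀ) := by
    rw [← Matrix.mul_assoc, Matrix.mul_assoc U, h6]
  have h9 := congrArg Matrix.transpose h7
  simp only [Matrix.transpose_mul, Matrix.transpose_transpose] at h9
  rw [h9]
  exact h8.symm

/-! ### Gaussian matrices -/

lemma absolutelyContinuous_pi_fin {α : Type*} [MeasurableSpace α] {μ ν : Measure α}
    [SigmaFinite μ] [SigmaFinite ν] (h : μ ≪ ν) (N : ℕ) :
    (Measure.pi fun _ : Fin N => μ) ≪ (Measure.pi fun _ : Fin N => ν) := by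
  induction N with
  | zero =>
    rw [Measure.pi_of_empty (fun _ : Fin 0 => μ), Measure.pi_of_empty (fun _ : Fin 0 => ν)]
  | succ N ih =>
    have e1 := measurePreserving_piFinSuccAbove (fun _ : Fin (N + 1) => μ) 0
    have e2 := measurePreserving_piFinSuccAbove (fun _ : Fin (N + 1) => ν) 0
    have h1 := (h.prod ih).map (MeasurableEquiv.piFinSuccAbove (fun _ : Fin (N + 1) => α) 0).symm.measurable
    rw [← (e1.symm _).map_eq, ← (e2.symm _).map_eq]
    exact h1

lemma gaussMeasure_absolutelyContinuous (m n : ℕ) {σ : NNReal} (hσ : σ ≠ 0) :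
    gaussMeasure m n σ ≪ (volume : Measure (Fin m → Fin n → ℝ)) :=
  absolutelyContinuous_pi_fin (absolutelyContinuous_pi_fin
    (ProbabilityTheory.gaussianReal_absolutelyContinuous 0 (pow_ne_zero 2 hσ)) n) m

instance (m n : ℕ) (σ : NNReal) : IsProbabilityMeasure (gaussMeasure m n σ) := by
  unfold gaussMeasure; infer_instance

lemma charFunDual_gaussMeasure (m n : ℕ) (σ : NNReal) (L : StrongDual ℝ (Fin m → Fin n → ℝ)) :
    charFunDual (gaussMeasure m n σ) L =
      Complex.exp (-((∑ i, ∑ j, ((σ : ℝ) * L (Pi.single i (Pi.single j 1))) ^ 2 : ℝ) : ℂ) / 2) := by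
  have h1 : ∀ L : StrongDual ℝ ℝ, charFunDual (ProbabilityTheory.gaussianReal 0 (σ ^ 2)) L
      = Complex.exp (-((((σ : ℝ) * L 1) ^ 2 : ℝ) : ℂ) / 2) := by
    intro L
    rw [ProbabilityTheory.IsGaussian.charFunDual_eq]
    have hL : ∀ x, L x = L 1 * x := fun x => by
      have := L.map_smul x 1
      simp only [smul_eq_mul, mul_one] at this
      rw [this, mul_comm]
    have hL' : (⇑L : ℝ → ℝ) = fun x => L 1 * x := funext hL
    have h2 : ∫ x, (L x : ℂ) ∂(ProbabilityTheory.gaussianReal 0 (σ ^ 2)) = 0 := by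
      have : ∫ x, L x ∂(ProbabilityTheory.gaussianReal 0 (σ ^ 2)) = 0 := by
        rw [hL', integral_const_mul]
        simp
      rw [integral_complex_ofReal, this, Complex.ofReal_zero]
    have h3 : ProbabilityTheory.variance L (ProbabilityTheory.gaussianReal 0 (σ ^ 2))
        = L 1 ^ 2 * (σ : ℝ) ^ 2 := by
      have h3 := ProbabilityTheory.variance_fun_id_gaussianReal (μ := 0) (v := σ ^ 2)
      have h4 := ProbabilityTheory.variance_const_mul (L 1) (fun x : ℝ => x)
        (ProbabilityTheory.gaussianReal 0 (σ ^ 2))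
      rw [h3] at h4
      rw [← hL', NNReal.coe_pow] at h4
      exact h4
    rw [h2, h3]
    push_cast
    congr 1
    ring
  unfold gaussMeasure
  rw [charFunDual_pi]
  simp_rw [charFunDual_pi, h1]
  simp_rw [← Complex.exp_sum]
  congr 1
  push_cast
  simp only [Finset.sum_neg_distrib, Finset.sum_div, neg_div]
  simp

/-- The action of a matrix on the columns of an `m × n` array of numbers. -/
noncomputable def colAct {m n : ℕ} (Q : Matrix (Fin m) (Fin m) ℝ) :
    (Fin m → Fin n → ℝ) →L[ℝ] (Fin m → Fin n → ℝ) :=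
  LinearMap.toContinuousLinearMap
    { toFun := fun R => Q * (Matrix.of R : Matrix (Fin m) (Fin n) ℝ)
      map_add' := fun R S => Matrix.mul_add Q (Matrix.of R) (Matrix.of S)
      map_smul' := fun t R => by
        rw [RingHom.id_apply]; exact Matrix.mul_smul Q t (Matrix.of R) }

lemma of_colAct {m n : ℕ} (Q : Matrix (Fin m) (Fin m) ℝ) (R : Fin m → Fin n → ℝ) :
    (Matrix.of (colAct Q R) : Matrix (Fin m) (Fin n) ℝ) = Q * Matrix.of R := rfl

/-- A matrix of i.i.d. centred Gaussians is invariant in law under orthogonal column rotations. -/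
lemma measurePreserving_colAct {m n : ℕ} (σ : NNReal) {Q : Matrix (Fin m) (Fin m) ℝ}
    (hQ : Qᵀ * Q = 1) :
    MeasurePreserving (colAct Q) (gaussMeasure m n σ) (gaussMeasure m n σ) := by
  refine ⟨(colAct Q).measurable, ?_⟩
  have := Measure.isProbabilityMeasure_map (μ := gaussMeasure m n σ)
    (f := colAct Q) (colAct Q).measurable.aemeasurable
  refine Measure.ext_of_charFunDual (funext fun L => ?_)
  rw [charFunDual_map, charFunDual_gaussMeasure, charFunDual_gaussMeasure]
  have hQ' : Q * Qᵀ = 1 := mul_eq_one_comm.1 hQ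
  have hc : ∀ i j, (L.comp (colAct Q)) (Pi.single i (Pi.single j 1))
      = ∑ l, Q l i * L (Pi.single l (Pi.single j 1)) := by
    intro i j
    have : colAct Q (Pi.single i (Pi.single j 1))
        = ∑ l, Q l i • (Pi.single l (Pi.single j 1) : Fin m → Fin n → ℝ) := by
      funext x y
      have e : colAct Q (Pi.single i (Pi.single j 1)) x y
          = ∑ z, Q x z * (Pi.single i (Pi.single j 1) : Fin m → Fin n → ℝ) z y := rfl
      rw [e, Finset.sum_eq_single i (fun b _ hb => by simp [hb]) (by simp), Finset.sum_apply,
        Finset.sum_apply,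
        Finset.sum_eq_single x (fun b _ hb => by simp [hb.symm]) (by simp)]
      simp
    rw [ContinuousLinearMap.comp_apply, this, map_sum]
    simp
  simp_rw [hc]
  congr 4
  rw [Finset.sum_comm]
  conv_rhs => rw [Finset.sum_comm]
  refine Finset.sum_congr rfl fun j _ => ?_
  set v : Fin m → ℝ := fun l => L (Pi.single l (Pi.single j 1)) with hv
  simp only [mul_pow, ← Finset.mul_sum]
  congr 1
  have e1 : ∑ i, (∑ l, Q l i * v l) ^ 2 = (v ᵥ* Q) ⬝ᵥ (v ᵥ* Q) := by
    simp [dotProduct, Matrix.vecMul, pow_two, mul_comm]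
  have e2 : ∑ i, v i ^ 2 = v ⬝ᵥ v := by simp [dotProduct, pow_two]
  rw [e1, e2, ← Matrix.mulVec_transpose Q v, Matrix.dotProduct_mulVec, Matrix.vecMul_transpose,
    Matrix.mulVec_mulVec, hQ', Matrix.one_mulVec]

/-- Averaging over finitely many measure-preserving maps: if almost every point is sent into `E` by
at most a fraction `p` of the maps, then `E` has measure at most `p`. -/
lemma measure_le_of_average {Ω ι : Type*} [MeasurableSpace Ω] [Fintype ι] [Nonempty ι]
    (μ : Measure Ω) [IsProbabilityMeasure μ] (T : ι → Ω → Ω)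
    (hT : ∀ i, MeasurePreserving (T i) μ μ) {E : Set Ω} (hE : MeasurableSet E) (p : ℝ)
    (h : ∀ᵐ x ∂μ, (Nat.card {i : ι // T i x ∈ E} : ℝ) ≤ Fintype.card ι * p) :
    μ E ≤ ENNReal.ofReal p := by
  classical
  have h1 : ∑ i, μ (T i ⁻¹' E) = Fintype.card ι * μ E := by
    simp [fun i => (hT i).measure_preimage hE.nullMeasurableSet]
  have h2 : ∑ i, μ (T i ⁻¹' E) = ∫⁻ x, ∑ i, (T i ⁻¹' E).indicator 1 x ∂μ := by
    rw [lintegral_finsetSum _ fun i _ => measurable_one.indicator ((hT i).measurable hE)]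
    exact Finset.sum_congr rfl fun i _ => (lintegral_indicator_one ((hT i).measurable hE)).symm
  have h3 : ∫⁻ x, ∑ i, (T i ⁻¹' E).indicator 1 x ∂μ ≤ ∫⁻ _, ENNReal.ofReal (Fintype.card ι * p) ∂μ := by
    refine lintegral_mono_ae (h.mono fun x hx => ?_)
    have : ∑ i, (T i ⁻¹' E).indicator (1 : Ω → ENNReal) x = (Nat.card {i : ι // T i x ∈ E} : ENNReal) := by
      rw [Nat.card_eq_fintype_card, Fintype.card_subtype, ← Finset.sum_boole]
      rfl
    rw [this]
    have := ENNReal.ofReal_le_ofReal hx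
    rwa [ENNReal.ofReal_natCast] at this
  rw [lintegral_const, measure_univ, mul_one, ENNReal.ofReal_mul (by positivity),
    ENNReal.ofReal_natCast, ← h2, h1] at h3
  exact (ENNReal.mul_le_mul_iff_right (by simp [Fintype.card_ne_zero]) (by simp)).1 h3

/-! ### Rademacher sums -/

/-- The random sign attached to a bit. -/
def bitSign (b : Bool) : ℝ := if b then 1 else -1

lemma bitSign_mul_self (b : Bool) : bitSign b * bitSign b = 1 := by
  cases b <;> simp [bitSign]

/-- One-sided Hoeffding (Rademacher) bound in counting form. -/
lemma card_sign_sum_gt {D : ℕ} (a : Fin D → ℝ) {u v : ℝ} (hv : 0 < v) (hu : 0 ≤ u)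
    (ha : ∑ k, a k ^ 2 ≤ v) :
    (Nat.card {e : Fin D → Bool // u < ∑ k, bitSign (e k) * a k} : ℝ)
      ≤ 2 ^ D * Real.exp (-(u ^ 2 / (2 * v))) := by
  classical
  set l := u / v with hl
  have hl0 : 0 ≤ l := by positivity
  have h1 : ∑ e : Fin D → Bool, Real.exp (l * ∑ k, bitSign (e k) * a k)
      = ∏ k, (2 * Real.cosh (l * a k)) := by
    have : ∀ k, 2 * Real.cosh (l * a k) = ∑ b : Bool, Real.exp (l * (bitSign b * a k)) := by
      intro k
      simp [bitSign, Real.cosh_eq]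
      ring
    simp_rw [this]
    rw [Finset.prod_univ_sum, Fintype.piFinset_univ]
    refine Finset.sum_congr rfl fun e _ => ?_
    rw [Finset.mul_sum, Real.exp_sum]
  have h2 : ∏ k, (2 * Real.cosh (l * a k)) ≤ 2 ^ D * Real.exp (l ^ 2 * v / 2) := by
    calc ∏ k, (2 * Real.cosh (l * a k)) ≤ ∏ k : Fin D, (2 * Real.exp ((l * a k) ^ 2 / 2)) :=
          Finset.prod_le_prod (fun k _ => by have := Real.cosh_pos (l * a k); positivity)
            fun k _ => by gcongr; exact Real.cosh_le_exp_half_sq _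
      _ = 2 ^ D * Real.exp (l ^ 2 * (∑ k, a k ^ 2) / 2) := by
          rw [Finset.prod_mul_distrib, ← Real.exp_sum]
          simp [Finset.mul_sum, Finset.sum_div, mul_pow]
      _ ≤ _ := by gcongr
  have h3 : (Nat.card {e : Fin D → Bool // u < ∑ k, bitSign (e k) * a k} : ℝ) * Real.exp (l * u)
      ≤ ∑ e : Fin D → Bool, Real.exp (l * ∑ k, bitSign (e k) * a k) := by
    rw [Nat.card_eq_fintype_card, Fintype.card_subtype, ← nsmul_eq_mul]
    refine (Finset.card_nsmul_le_sum _ _ _ fun e he => ?_).trans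
      (Finset.sum_le_sum_of_subset_of_nonneg (Finset.filter_subset _ _) fun _ _ _ =>
        (Real.exp_pos _).le)
    have := (Finset.mem_filter.1 he).2
    exact Real.exp_le_exp.2 (mul_le_mul_of_nonneg_left this.le hl0)
  have h4 : (Nat.card {e : Fin D → Bool // u < ∑ k, bitSign (e k) * a k} : ℝ) * Real.exp (l * u)
      ≤ 2 ^ D * Real.exp (l ^ 2 * v / 2) := h3.trans (h1.le.trans h2)
  rw [← le_div_iff₀ (Real.exp_pos _), mul_div_assoc, ← Real.exp_sub] at h4
  refine h4.trans (le_of_eq ?_)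
  congr 2
  rw [hl]; field_simp; ring

/-- Two-sided version of `card_sign_sum_gt`, for squares. The threshold `s * W` is strict, so the
case `W = 0` needs no exception. -/
lemma card_sign_sq_gt {D : ℕ} (a : Fin D → ℝ) {s W : ℝ} (hs : 0 ≤ s) (hW : 0 ≤ W)
    (ha : D * ∑ k, a k ^ 2 ≤ W) :
    (Nat.card {e : Fin D → Bool // s * W < (∑ k, bitSign (e k) * a k) ^ 2} : ℝ)
      ≤ 2 ^ D * (2 * Real.exp (-(s * D / 2))) := by
  classical
  by_cases h0 : ∑ k, a k ^ 2 = 0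
  · have ha0 : ∀ k, a k = 0 := fun k => by
      have := (Finset.sum_eq_zero_iff_of_nonneg (fun i _ => sq_nonneg (a i))).1 h0 k
        (Finset.mem_univ k)
      exact pow_eq_zero_iff (two_ne_zero) |>.1 this
    have : IsEmpty {e : Fin D → Bool // s * W < (∑ k, bitSign (e k) * a k) ^ 2} := by
      refine ⟨fun e => ?_⟩
      have := e.2
      simp only [ha0, mul_zero, Finset.sum_const_zero] at this
      nlinarith [mul_nonneg hs hW]
    rw [Nat.card_of_isEmpty, Nat.cast_zero]
    positivity
  · have hpos : 0 < ∑ k, a k ^ 2 :=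
      lt_of_le_of_ne (Finset.sum_nonneg fun _ _ => sq_nonneg _) (Ne.symm h0)
    have hD : (0 : ℝ) < D := by
      rcases Nat.eq_zero_or_pos D with rfl | h
      · simp at h0
      · exact_mod_cast h
    have hWpos : 0 < W := lt_of_lt_of_le (by positivity) ha
    have hv : 0 < W / D := by positivity
    have hav : ∑ k, a k ^ 2 ≤ W / D := by rw [le_div_iff₀ hD]; linarith
    have hav' : ∑ k, (-a k) ^ 2 ≤ W / D := by simpa using hav
    set u := Real.sqrt (s * W) with hu
    have husq : u ^ 2 = s * W := Real.sq_sqrt (by positivity)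
    have h1 := card_sign_sum_gt a hv (Real.sqrt_nonneg (s * W)) hav
    have h2 := card_sign_sum_gt (fun k => -a k) hv (Real.sqrt_nonneg (s * W)) hav'
    rw [← hu, husq] at h1 h2
    have e : s * W / (2 * (W / D)) = s * D / 2 := by field_simp
    rw [e] at h1 h2
    have h3 : Nat.card {e : Fin D → Bool // s * W < (∑ k, bitSign (e k) * a k) ^ 2}
        ≤ Nat.card {e : Fin D → Bool // u < ∑ k, bitSign (e k) * a k}
          + Nat.card {e : Fin D → Bool // u < ∑ k, bitSign (e k) * -a k} := by
      simp only [Nat.card_eq_fintype_card, Fintype.card_subtype]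
      refine (Finset.card_le_card fun e he => ?_).trans (Finset.card_union_le _ _)
      have := (Finset.mem_filter.1 he).2
      have habs : u < |∑ k, bitSign (e k) * a k| := by
        rw [hu]; exact (Real.sqrt_lt_sqrt (by positivity) this).trans_eq (Real.sqrt_sq_eq_abs _)
      simp only [Finset.mem_union, Finset.mem_filter, Finset.mem_univ, true_and, mul_neg,
        Finset.sum_neg_distrib]
      exact lt_abs.1 habs
    have h3' : (Nat.card {e : Fin D → Bool // s * W < (∑ k, bitSign (e k) * a k) ^ 2} : ℝ)
        ≤ Nat.card {e : Fin D → Bool // u < ∑ k, bitSign (e k) * a k}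
          + Nat.card {e : Fin D → Bool // u < ∑ k, bitSign (e k) * -a k} := by exact_mod_cast h3
    linarith

/-! ### Sign flips -/

/-- Multiplication by the signs `e` in the coordinates of the frame `F`, and the identity on the
orthogonal complement of its span. -/
noncomputable def signFlip {m D : ℕ} (F : Matrix (Fin m) (Fin D) ℝ) (e : Fin D → Bool) :
    Matrix (Fin m) (Fin m) ℝ :=
  1 + F * (Matrix.diagonal (fun k => bitSign (e k)) - 1) * Fᵀ

lemma transpose_mul_signFlip {m D : ℕ} {F : Matrix (Fin m) (Fin D) ℝ} (hF : Fᵀ * F = 1)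
    (e : Fin D → Bool) :
    Fᵀ * signFlip F e = Matrix.diagonal (fun k => bitSign (e k)) * Fᵀ := by
  rw [signFlip, Matrix.mul_add, Matrix.mul_one, ← Matrix.mul_assoc, ← Matrix.mul_assoc, hF,
    Matrix.one_mul, Matrix.sub_mul, Matrix.one_mul]
  abel

lemma transpose_signFlip {m D : ℕ} (F : Matrix (Fin m) (Fin D) ℝ) (e : Fin D → Bool) :
    (signFlip F e)ᵀ = signFlip F e := by
  simp [signFlip, Matrix.transpose_mul, Matrix.mul_assoc]

lemma signFlip_mul_self {m D : ℕ} {F : Matrix (Fin m) (Fin D) ℝ} (hF : Fᵀ * F = 1)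
    (e : Fin D → Bool) : (signFlip F e)ᵀ * signFlip F e = 1 := by
  have hd : Matrix.diagonal (fun k => bitSign (e k)) * Matrix.diagonal (fun k => bitSign (e k))
      = 1 := by
    simp [Matrix.diagonal_mul_diagonal, bitSign_mul_self]
  rw [transpose_signFlip]
  conv_lhs => enter [1]; rw [signFlip]
  rw [Matrix.add_mul, Matrix.one_mul, Matrix.mul_assoc _ Fᵀ, transpose_mul_signFlip hF,
    ← Matrix.mul_assoc, Matrix.mul_assoc F, Matrix.sub_mul, hd, Matrix.one_mul, signFlip,
    add_assoc, ← Matrix.add_mul, ← Matrix.mul_add]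
  simp

lemma signFlip_mul_of_eq_zero {m n D : ℕ} {F : Matrix (Fin m) (Fin D) ℝ}
    {C : Matrix (Fin m) (Fin n) ℝ} (hC : Fᵀ * C = 0) (e : Fin D → Bool) :
    signFlip F e * C = C := by
  rw [signFlip, Matrix.add_mul, Matrix.one_mul, Matrix.mul_assoc, hC, Matrix.mul_zero, add_zero]

lemma sampleA_mul {m n d : ℕ} (X : Matrix (Fin m) (Fin m) ℝ) (M : Matrix (Fin m) (Fin n) ℝ)
    (p : Fin n → ℝ) (c : Fin d → Fin n) :
    sampleA d (X * M) p c = X * sampleA d M p c := by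
  ext i j
  simp [sampleA, Matrix.mul_apply, Finset.sum_div, mul_div_assoc]

lemma addNoise_colAct {m n : ℕ} {Q : Matrix (Fin m) (Fin m) ℝ} {C : Matrix (Fin m) (Fin n) ℝ}
    (hQC : Q * C = C) (R : Fin m → Fin n → ℝ) :
    addNoise C (colAct Q R) = Q * addNoise C R := by
  rw [addNoise, addNoise, of_colAct, Matrix.mul_add, hQC]

lemma IsFrobMax.of_mul {m d k : ℕ} {A : Matrix (Fin m) (Fin d) ℝ} {U : Matrix (Fin m) (Fin k) ℝ}
    {Q : Matrix (Fin m) (Fin m) ℝ} (hQ : Qᵀ * Q = 1) (h : IsFrobMax (Q * A) (Q * U)) :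
    IsFrobMax A U := by
  have e : ∀ {a b : ℕ} (X : Matrix (Fin m) (Fin a) ℝ) (Y : Matrix (Fin m) (Fin b) ℝ),
      (Q * X)ᵀ * (Q * Y) = Xᵀ * Y := fun X Y => by
    rw [Matrix.transpose_mul, Matrix.mul_assoc, ← Matrix.mul_assoc Qᵀ, hQ, Matrix.one_mul]
  refine ⟨by rw [← e, h.1], fun U' hU' => ?_⟩
  have := h.2 (Q * U') (by rw [e, hU'])
  rwa [e, e] at this

/-! ### The bad event and its measurability -/

/-- Projections of sets cut out of a σ-compact product by a closed condition and a strict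
inequality between continuous functions are Borel. -/
lemma measurableSet_exists_of_isClosed {X Y : Type*} [TopologicalSpace X] [TopologicalSpace Y]
    [T2Space X] [SigmaCompactSpace (X × Y)] [MeasurableSpace X] [BorelSpace X]
    {K : Set (X × Y)} (hK : IsClosed K) {f g : X × Y → ℝ} (hf : Continuous f) (hg : Continuous g) :
    MeasurableSet {x | ∃ y, (x, y) ∈ K ∧ f (x, y) < g (x, y)} := by
  have h1 : {x | ∃ y, (x, y) ∈ K ∧ f (x, y) < g (x, y)}
      = ⋃ N : ℕ, Prod.fst '' (K ∩ {q | f q + 1 / ((N : ℝ) + 1) ≤ g q}) := by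
    ext x
    simp only [Set.mem_ofPred_eq, Set.mem_iUnion, Set.mem_image, Set.mem_inter_iff, Prod.exists,
      exists_and_right, exists_eq_right]
    constructor
    · rintro ⟨y, hy, hlt⟩
      obtain ⟨N, hN⟩ := exists_nat_one_div_lt (sub_pos.2 hlt)
      exact ⟨N, y, hy, by linarith⟩
    · rintro ⟨N, y, hy, hle⟩
      have : 0 < 1 / ((N : ℝ) + 1) := Nat.one_div_pos_of_nat
      exact ⟨y, hy, by linarith⟩
  rw [h1]
  refine MeasurableSet.iUnion fun N => ?_
  have hcl : IsClosed (K ∩ {q | f q + 1 / ((N : ℝ) + 1) ≤ g q}) :=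
    hK.inter (isClosed_le (hf.add continuous_const) hg)
  obtain ⟨T, hT, hTe⟩ := (isSigmaCompact_univ.of_isClosed_subset hcl (Set.subset_univ _)).image
    continuous_fst
  rw [← hTe]
  exact MeasurableSet.iUnion fun l => (hT l).measurableSet

/-- The residual of the `j`-th column of `M` after projection off the orthonormal columns of `U`. -/
noncomputable def resid {m n k : ℕ} (M : Matrix (Fin m) (Fin n) ℝ) (U : Matrix (Fin m) (Fin k) ℝ)
    (j : Fin n) : Fin m → ℝ :=
  (1 - U * Uᵀ).mulVec fun i => M i j

/-- The noise realizations for which some maximizer `U` of size `k` in the range of the sampled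
matrix leaves a residual `x` of the `j`-th column with `s * ‖z‖² < (F z)_i²`, where `z = Fᵀ x`. -/
def badEvent {m n d D : ℕ} (C : Matrix (Fin m) (Fin n) ℝ) (p : Fin n → ℝ) (c : Fin d → Fin n)
    (F : Matrix (Fin m) (Fin D) ℝ) (i : Fin m) (j : Fin n) (k : ℕ) (s : ℝ) :
    Set (Fin m → Fin n → ℝ) :=
  {R | ∃ B : Fin d → Fin k → ℝ,
    IsFrobMax (sampleA d (addNoise C R) p c) (sampleA d (addNoise C R) p c * Matrix.of B) ∧
    s * ∑ l, (Fᵀ *ᵥ resid (addNoise C R) (sampleA d (addNoise C R) p c * Matrix.of B) j) l ^ 2 <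
      (F *ᵥ (Fᵀ *ᵥ resid (addNoise C R) (sampleA d (addNoise C R) p c * Matrix.of B) j)) i ^ 2}

lemma measurableSet_badEvent {m n d D : ℕ} (C : Matrix (Fin m) (Fin n) ℝ) (p : Fin n → ℝ)
    (c : Fin d → Fin n) (F : Matrix (Fin m) (Fin D) ℝ) (i : Fin m) (j : Fin n) (k : ℕ) (s : ℝ) :
    MeasurableSet (badEvent C p c F i j k s) := by
  have hA : Continuous fun q : (Fin m → Fin n → ℝ) × (Fin d → Fin k → ℝ) =>
      sampleA d (addNoise C q.1) p c := by
    refine continuous_matrix fun a b => ?_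
    simp only [sampleA, addNoise, Matrix.of_apply, Matrix.add_apply]
    fun_prop
  have hB : Continuous fun q : (Fin m → Fin n → ℝ) × (Fin d → Fin k → ℝ) =>
      (Matrix.of q.2 : Matrix (Fin d) (Fin k) ℝ) := continuous_snd
  have hU := hA.matrix_mul hB
  have hx : Continuous fun q : (Fin m → Fin n → ℝ) × (Fin d → Fin k → ℝ) =>
      Fᵀ *ᵥ resid (addNoise C q.1) (sampleA d (addNoise C q.1) p c * Matrix.of q.2) j := by
    refine continuous_const.matrix_mulVec ?_
    refine (continuous_const.sub (hU.matrix_mul hU.matrix_transpose)).matrix_mulVec ?_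
    refine continuous_pi fun a => ?_
    simp only [addNoise, Matrix.of_apply, Matrix.add_apply]
    fun_prop
  have hfrob : ∀ {a b : ℕ}, Continuous fun X : Matrix (Fin a) (Fin b) ℝ => frobSq X := by
    intro a b
    unfold frobSq
    fun_prop
  refine measurableSet_exists_of_isClosed
    (K := {q | IsFrobMax (sampleA d (addNoise C q.1) p c)
      (sampleA d (addNoise C q.1) p c * Matrix.of q.2)})
    (f := fun q => s * ∑ l, (Fᵀ *ᵥ resid (addNoise C q.1)
      (sampleA d (addNoise C q.1) p c * Matrix.of q.2) j) l ^ 2)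
    (g := fun q => (F *ᵥ (Fᵀ *ᵥ resid (addNoise C q.1)
      (sampleA d (addNoise C q.1) p c * Matrix.of q.2) j)) i ^ 2) ?_ ?_ ?_
  · refine IsClosed.inter (isClosed_eq (hU.matrix_transpose.matrix_mul hU) continuous_const) ?_
    have : {q : (Fin m → Fin n → ℝ) × (Fin d → Fin k → ℝ) | ∀ U' : Matrix (Fin m) (Fin k) ℝ,
        U'ᵀ * U' = 1 → frobSq (U'ᵀ * sampleA d (addNoise C q.1) p c) ≤
          frobSq ((sampleA d (addNoise C q.1) p c * Matrix.of q.2)ᵀ *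
            sampleA d (addNoise C q.1) p c)} =
        ⋂ U' : {U' : Matrix (Fin m) (Fin k) ℝ // U'ᵀ * U' = 1},
          {q | frobSq (U'.1ᵀ * sampleA d (addNoise C q.1) p c) ≤
          frobSq ((sampleA d (addNoise C q.1) p c * Matrix.of q.2)ᵀ *
            sampleA d (addNoise C q.1) p c)} := by
      ext q; simp
    refine (this ▸ isClosed_iInter fun U' => ?_ : IsClosed _)
    exact isClosed_le (hfrob.comp (continuous_const.matrix_mul hA))
      (hfrob.comp (hU.matrix_transpose.matrix_mul hA))
  · refine continuous_const.mul (continuous_finsetSum _ fun l _ => ?_)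
    exact ((continuous_apply l).comp hx).pow 2
  · exact ((continuous_apply i).comp (continuous_const.matrix_mulVec hx)).pow 2

/-! ### Almost sure uniqueness of the projection -/

/-- For almost every noise matrix the maximizers contained in the range of the sampled matrix all
span the same subspace. -/
lemma ae_proj_unique {m n d : ℕ} (C : Matrix (Fin m) (Fin n) ℝ) (p : Fin n → ℝ)
    (c : Fin d → Fin n) (k : ℕ) :
    ∀ᵐ R : Fin m → Fin n → ℝ, ∀ B B' : Matrix (Fin d) (Fin k) ℝ,
      IsFrobMax (sampleA d (addNoise C R) p c) (sampleA d (addNoise C R) p c * B) →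
      IsFrobMax (sampleA d (addNoise C R) p c) (sampleA d (addNoise C R) p c * B') →
      (sampleA d (addNoise C R) p c * B) * (sampleA d (addNoise C R) p c * B)ᵀ =
      (sampleA d (addNoise C R) p c * B') * (sampleA d (addNoise C R) p c * B')ᵀ := by
  set L : {U : Matrix (Fin m) (Fin k) ℝ // Uᵀ * U = 1} →
      (Fin m → Fin n → ℝ) →ₗ[ℝ] (Fin k × Fin d → ℝ) := fun U =>
    { toFun := fun R b => (U.1ᵀ * sampleA d (Matrix.of R) p c) b.1 b.2
      map_add' := fun R S => by
        funext b
        simp [sampleA, Matrix.mul_apply, add_div, mul_add, Finset.sum_add_distrib]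
      map_smul' := fun t R => by
        funext b
        simp only [sampleA, Matrix.mul_apply, Matrix.of_apply, Pi.smul_apply, smul_eq_mul,
          RingHom.id_apply, Finset.mul_sum]
        exact Finset.sum_congr rfl fun _ _ => by ring } with hL
  have hLa : ∀ U R b, L U R b = (U.1ᵀ * sampleA d (Matrix.of R) p c) b.1 b.2 :=
    fun _ _ _ => rfl
  have hent : ∀ (U : Matrix (Fin m) (Fin k) ℝ), Uᵀ * U = 1 → ∀ i a, |U i a| ≤ 1 := by
    intro U hU i a
    have := congrFun (congrFun hU a) a
    rw [Matrix.one_apply_eq, Matrix.mul_apply] at this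
    have h2 := Finset.single_le_sum (f := fun i => Uᵀ a i * U i a)
      (fun i _ => by simpa using mul_self_nonneg _) (Finset.mem_univ i)
    rw [this] at h2
    exact abs_le_one_iff_mul_self_le_one.2 h2
  have key := ae_inner_eq_of_max (volume : Measure (Fin m → Fin n → ℝ)) L
    (∑ b : Fin d, m * |√(d * p (c b))|⁻¹) (by
      intro U x b
      rw [hLa, Matrix.mul_apply]
      refine (Finset.abs_sum_le_sum_abs _ _).trans ?_
      have h1 : ∀ i, |U.1ᵀ b.1 i * sampleA d (Matrix.of x) p c i b.2|
          ≤ ‖x‖ * |√(d * p (c b.2))|⁻¹ := by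
        intro i
        simp only [sampleA, Matrix.of_apply, Matrix.transpose_apply]
        rw [abs_mul, abs_div, div_eq_mul_inv]
        have h2 : |x i (c b.2)| ≤ ‖x‖ := (norm_le_pi_norm (x i) (c b.2)).trans (norm_le_pi_norm x i)
        have h3 := hent U.1 U.2 i b.1
        calc _ ≤ 1 * (‖x‖ * |√(d * p (c b.2))|⁻¹) := by gcongr
          _ = _ := one_mul _
      refine (Finset.sum_le_sum fun i _ => h1 i).trans ?_
      rw [Finset.sum_const, Finset.card_univ, Fintype.card_fin, nsmul_eq_mul, mul_comm ‖x‖,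
        ← mul_assoc]
      gcongr
      exact Finset.single_le_sum (f := fun b => (m : ℝ) * |√(d * p (c b))|⁻¹)
        (fun _ _ => by positivity) (Finset.mem_univ b.2)) (Matrix.of.symm C)
  filter_upwards [key] with R hR B B' hB hB'
  set A := sampleA d (addNoise C R) p c with hA
  have hLA : ∀ U b, L U (Matrix.of.symm C + R) b = (U.1ᵀ * A) b.1 b.2 := fun _ _ => rfl
  have hLX : ∀ U b (X : Matrix (Fin m) (Fin m) ℝ),
      L U (Matrix.of.symm (X * addNoise C R)) b = (U.1ᵀ * (X * A)) b.1 b.2 := by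
    intro U b X
    rw [hLa, Equiv.apply_symm_apply, sampleA_mul]
  have hfr : ∀ U, ∑ b, (L U (Matrix.of.symm C + R) b) ^ 2 = frobSq (U.1ᵀ * A) := by
    intro U
    simp only [hLA, frobSq, Fintype.sum_prod_type]
  refine proj_eq_of_trace hB.1 hB'.1 rfl rfl fun X => ?_
  have := hR ⟨A * B, hB.1⟩ ⟨A * B', hB'.1⟩
    (fun l => by rw [hfr, hfr]; exact hB.2 l.1 l.2) (fun l => by rw [hfr, hfr]; exact hB'.2 l.1 l.2)
    (Matrix.of.symm (X * addNoise C R))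
  simp only [hLA, hLX] at this
  have htr : ∀ Y Z : Matrix (Fin k) (Fin d) ℝ, (Yᵀ * Z).trace
      = ∑ b : Fin k × Fin d, Y b.1 b.2 * Z b.1 b.2 := by
    intro Y Z
    rw [Fintype.sum_prod_type, Finset.sum_comm]
    simp [Matrix.trace, Matrix.mul_apply]
  rw [htr, htr]
  exact this

/-! ### Probability of the bad event -/

/-- With zero variance the noise vanishes almost surely. -/
lemma ae_gaussMeasure_zero (m n : ℕ) : ∀ᵐ R ∂(gaussMeasure m n 0), R = 0 := by
  have h1 : ∀ᵐ x ∂(ProbabilityTheory.gaussianReal 0 ((0 : NNReal) ^ 2)), x = 0 := by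
    rw [zero_pow two_ne_zero, ProbabilityTheory.gaussianReal_zero_var]
    simp [ae_dirac_eq]
  have h2 : ∀ᵐ v ∂(Measure.pi fun _ : Fin n =>
      ProbabilityTheory.gaussianReal 0 ((0 : NNReal) ^ 2)), v = 0 := by
    have : ∀ j : Fin n, ∀ᵐ v ∂(Measure.pi fun _ : Fin n =>
        ProbabilityTheory.gaussianReal 0 ((0 : NNReal) ^ 2)), v j = 0 :=
      fun j => (Measure.tendsto_eval_ae_ae (μ := fun _ : Fin n =>
        ProbabilityTheory.gaussianReal 0 ((0 : NNReal) ^ 2)) (i := j)).eventually h1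
    filter_upwards [ae_all_iff.2 this] with v hv
    exact funext hv
  have : ∀ i : Fin m, ∀ᵐ R ∂(gaussMeasure m n 0), R i = 0 :=
    fun i => (Measure.tendsto_eval_ae_ae (μ := fun _ : Fin m => Measure.pi fun _ : Fin n =>
      ProbabilityTheory.gaussianReal 0 ((0 : NNReal) ^ 2)) (i := i)).eventually h2
  filter_upwards [ae_all_iff.2 this] with R hR
  exact funext hR

/-- Without noise the maximizer lies in the range of `C`, which is orthogonal to the frame. -/
lemma zero_notMem_badEvent {m n d D : ℕ} {C : Matrix (Fin m) (Fin n) ℝ} (p : Fin n → ℝ)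
    (c : Fin d → Fin n) {F : Matrix (Fin m) (Fin D) ℝ} (hC : Fᵀ * C = 0) (i : Fin m) (j : Fin n)
    (k : ℕ) (s : ℝ) : (0 : Fin m → Fin n → ℝ) ∉ badEvent C p c F i j k s := by
  rintro ⟨B, -, hB⟩
  have h0 : addNoise C 0 = C := by simp [addNoise]
  have hFA : Fᵀ * sampleA d C p c = 0 := by
    ext a b
    have := congrFun (congrFun hC a) (c b)
    rw [Matrix.mul_apply] at this
    simp only [Matrix.mul_apply, sampleA, Matrix.of_apply, ← mul_div_assoc, ← Finset.sum_div, this]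
    simp
  have hFc : (Fᵀ *ᵥ fun a => C a j) = 0 := by
    funext a
    have := congrFun (congrFun hC a) j
    rwa [Matrix.mul_apply] at this
  have hz : Fᵀ *ᵥ resid (addNoise C 0) (sampleA d (addNoise C 0) p c * Matrix.of B) j = 0 := by
    rw [h0, resid, Matrix.mulVec_mulVec, Matrix.mul_sub, Matrix.mul_one, ← Matrix.mul_assoc,
      ← Matrix.mul_assoc, hFA, Matrix.zero_mul, Matrix.zero_mul, sub_zero, hFc]
  rw [hz] at hB
  simp at hB

/-- If `M` and `U` are both transformed by a sign flip, the frame coordinates of the residual change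
by the same signs. -/
lemma mulVec_resid_signFlip {m n k D : ℕ} {F : Matrix (Fin m) (Fin D) ℝ} (hF : Fᵀ * F = 1)
    (e : Fin D → Bool) (M : Matrix (Fin m) (Fin n) ℝ) (U : Matrix (Fin m) (Fin k) ℝ) (j : Fin n)
    (l : Fin D) :
    (Fᵀ *ᵥ resid (signFlip F e * M) (signFlip F e * U) j) l =
      bitSign (e l) * (Fᵀ *ᵥ resid M U j) l := by
  have h1 : resid (signFlip F e * M) (signFlip F e * U) j = signFlip F e *ᵥ resid M U j := by
    have hcol : (fun i => (signFlip F e * M) i j) = signFlip F e *ᵥ fun i => M i j := by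
      funext i; rw [Matrix.mul_apply]; rfl
    rw [resid, resid, hcol, Matrix.mulVec_mulVec, Matrix.mulVec_mulVec]
    congr 1
    rw [Matrix.transpose_mul, Matrix.sub_mul, Matrix.one_mul, Matrix.mul_sub, Matrix.mul_one]
    simp only [Matrix.mul_assoc]
    rw [signFlip_mul_self hF, Matrix.mul_one]
  rw [h1, Matrix.mulVec_mulVec, transpose_mul_signFlip hF, ← Matrix.mulVec_mulVec,
    Matrix.mulVec_diagonal]

/-- The key probability estimate: averaging over the sign flips, which preserve the law of the noise
and the signal `C`, reduces it to a Rademacher tail bound. -/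
lemma gaussMeasure_badEvent_le {m n d D : ℕ} {C : Matrix (Fin m) (Fin n) ℝ} (p : Fin n → ℝ)
    (c : Fin d → Fin n) {F : Matrix (Fin m) (Fin D) ℝ} (hF : Fᵀ * F = 1) (hC : Fᵀ * C = 0)
    (i : Fin m) (hflat : ∀ l, F i l ^ 2 * D ≤ 1) (j : Fin n)
    (k : ℕ) {s : ℝ} (hs : 0 ≤ s) (σ : NNReal) :
    gaussMeasure m n σ (badEvent C p c F i j k s) ≤
      ENNReal.ofReal (2 * Real.exp (-(s * D / 2))) := by
  rcases eq_or_ne σ 0 with rfl | hσ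
  · have : gaussMeasure m n 0 (badEvent C p c F i j k s) = 0 := by
      refine measure_eq_zero_iff_ae_notMem.2 ?_
      filter_upwards [ae_gaussMeasure_zero m n] with R hR
      rw [hR]
      exact zero_notMem_badEvent p c hC i j k s
    rw [this]
    exact zero_le
  refine measure_le_of_average (gaussMeasure m n σ)
    (fun e : Fin D → Bool => colAct (signFlip F e))
    (fun e => measurePreserving_colAct σ (signFlip_mul_self hF e))
    (measurableSet_badEvent C p c F i j k s) _ ?_
  filter_upwards [(gaussMeasure_absolutelyContinuous m n hσ).ae_le (ae_proj_unique C p c k)]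
    with R hR
  rw [Fintype.card_fun, Fintype.card_bool, Fintype.card_fin, Nat.cast_pow, Nat.cast_ofNat]
  set A := sampleA d (addNoise C R) p c with hA
  have hAQ : ∀ e, sampleA d (addNoise C (colAct (signFlip F e) R)) p c = signFlip F e * A := by
    intro e
    rw [addNoise_colAct (signFlip_mul_of_eq_zero hC e), sampleA_mul]
  rcases isEmpty_or_nonempty {e : Fin D → Bool //
    colAct (signFlip F e) R ∈ badEvent C p c F i j k s} with hemp | ⟨e0, B0, hB0, -⟩
  · rw [Nat.card_of_isEmpty, Nat.cast_zero]
    positivity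
  rw [hAQ, Matrix.mul_assoc] at hB0
  have hmax0 := hB0.of_mul (signFlip_mul_self hF e0)
  set z := Fᵀ *ᵥ resid (addNoise C R) (A * Matrix.of B0) j with hz
  have hcount := card_sign_sq_gt (fun l => F i l * z l) hs
    (Finset.sum_nonneg fun l (_ : l ∈ Finset.univ) => sq_nonneg (z l)) (by
      rw [Finset.mul_sum]
      refine Finset.sum_le_sum fun l _ => ?_
      nlinarith [hflat l, sq_nonneg (z l)])
  refine le_trans ?_ hcount
  norm_cast
  refine Finite.card_le_of_embedding (Subtype.impEmbedding _ _ fun e he => ?_)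
  obtain ⟨B, hB, hlt⟩ := he
  rw [hAQ, Matrix.mul_assoc] at hB hlt
  have hres : resid (addNoise C R) (A * Matrix.of B) j
      = resid (addNoise C R) (A * Matrix.of B0) j := by
    rw [resid, resid, hR _ _ (hB.of_mul (signFlip_mul_self hF e)) hmax0]
  have hfl : ∀ l, (Fᵀ *ᵥ resid (addNoise C (colAct (signFlip F e) R))
      (signFlip F e * (A * Matrix.of B)) j) l = bitSign (e l) * z l := by
    intro l
    rw [addNoise_colAct (signFlip_mul_of_eq_zero hC e), mulVec_resid_signFlip hF, hres]
  rw [funext hfl] at hlt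
  have h1 : ∑ l, (bitSign (e l) * z l) ^ 2 = ∑ l, z l ^ 2 :=
    Finset.sum_congr rfl fun l _ => by
      rw [mul_pow, pow_two (bitSign _), bitSign_mul_self, one_mul]
  have h2 : (F *ᵥ fun l => bitSign (e l) * z l) i = ∑ l, bitSign (e l) * (F i l * z l) := by
    rw [Matrix.mulVec, dotProduct]
    exact Finset.sum_congr rfl fun l _ => by ring
  rw [h1, h2] at hlt
  exact hlt

/-! ### The deterministic incoherence bound -/

/-- A uniform bound on the squared entries of a vector bounds its incoherence. -/
lemma vecIncoh_le {m : ℕ} (x : Fin m → ℝ) {K : ℝ} (hK : 0 ≤ K)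
    (h : ∀ i, m * x i ^ 2 ≤ K * ∑ l, x l ^ 2) : vecIncoh x ≤ K := by
  have hx : 0 ≤ ∑ l, x l ^ 2 := Finset.sum_nonneg fun _ _ => sq_nonneg _
  unfold vecIncoh
  refine div_le_of_le_mul₀ hx hK ?_
  rw [Real.mul_iSup_of_nonneg (by positivity)]
  exact Real.iSup_le h (by positivity)

/-- Cauchy–Schwarz in the range of `U`, and the exclusion of the bad event in the range of `F`. -/
lemma sq_le_of_frame {m r D : ℕ} {U : Matrix (Fin m) (Fin r) ℝ} {F : Matrix (Fin m) (Fin D) ℝ}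
    (hFU : F * Fᵀ + U * Uᵀ = 1) (x : Fin m → ℝ) (i : Fin m) {s : ℝ} (hs : 0 ≤ s)
    (h : (F *ᵥ (Fᵀ *ᵥ x)) i ^ 2 ≤ s * ∑ l, (Fᵀ *ᵥ x) l ^ 2) :
    x i ^ 2 ≤ (rowNormSq U i + s) * ∑ l, x l ^ 2 := by
  set z := Fᵀ *ᵥ x with hz
  set y := Uᵀ *ᵥ x with hy
  have hx : x = F *ᵥ z + U *ᵥ y := by
    rw [hz, hy, Matrix.mulVec_mulVec, Matrix.mulVec_mulVec, ← Matrix.add_mulVec, hFU,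
      Matrix.one_mulVec]
  have hdot : ∀ {a : ℕ} (v : Fin a → ℝ), ∑ l, v l ^ 2 = v ⬝ᵥ v := fun v => by
    simp [dotProduct, pow_two]
  have hnorm : ∑ l, x l ^ 2 = ∑ l, z l ^ 2 + ∑ l, y l ^ 2 := by
    rw [hdot, hdot, hdot]
    conv_lhs => enter [2]; rw [hx]
    rw [dotProduct_add, Matrix.dotProduct_mulVec x F, Matrix.dotProduct_mulVec x U,
      ← Matrix.mulVec_transpose F x, ← Matrix.mulVec_transpose U x]
  have hy1 : (U *ᵥ y) i ^ 2 ≤ rowNormSq U i * ∑ l, y l ^ 2 := by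
    rw [Matrix.mulVec, dotProduct]
    exact Finset.sum_mul_sq_le_sq_mul_sq _ _ _
  have hxi : x i = (F *ᵥ z) i + (U *ᵥ y) i := congrFun hx i
  set ρ := rowNormSq U i with hρ
  have hρ0 : 0 ≤ ρ := Finset.sum_nonneg fun _ _ => sq_nonneg _
  set Z := ∑ l, z l ^ 2 with hZ
  set Y := ∑ l, y l ^ 2 with hY
  have hZ0 : 0 ≤ Z := Finset.sum_nonneg fun _ _ => sq_nonneg _
  have hY0 : 0 ≤ Y := Finset.sum_nonneg fun _ _ => sq_nonneg _
  rw [hxi, hnorm]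
  generalize (F *ᵥ z) i = u at *
  generalize (U *ᵥ y) i = v at *
  -- `2 u v ≤ s Y + ρ Z` because `(u v)² ≤ (s Y) (ρ Z)`
  have h4 : 2 * (u * v) ≤ s * Y + ρ * Z := by
    refine abs_le_of_sq_le_sq' ?_ (by positivity) |>.2
    have h5 : u ^ 2 * v ^ 2 ≤ (s * Z) * (ρ * Y) := by gcongr
    nlinarith [sq_nonneg (s * Y - ρ * Z)]
  nlinarith

lemma mul_rowNormSq_le {m n r : ℕ} (U : Matrix (Fin m) (Fin r) ℝ) (V : Matrix (Fin n) (Fin r) ℝ)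
    (i : Fin m) : m * rowNormSq U i ≤ r * incoh U V := by
  rcases Nat.eq_zero_or_pos r with rfl | hr
  · simp [rowNormSq]
  · have h1 : (m : ℝ) / r * rowNormSq U i ≤ incoh U V :=
      (le_ciSup (f := fun i => (m : ℝ) / r * rowNormSq U i) (Set.finite_range _).bddAbove i).trans
        (le_max_left _ _)
    have hr' : (0 : ℝ) < r := by exact_mod_cast hr
    calc (m : ℝ) * rowNormSq U i = r * ((m : ℝ) / r * rowNormSq U i) := by field_simp
      _ ≤ _ := by gcongr

/-! ### The union bound -/

instance isProbabilityMeasure_discMeasure_uniform (n : ℕ) [NeZero n] :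
    IsProbabilityMeasure (discMeasure fun _ : Fin n => (n : ℝ)⁻¹) := by
  refine ⟨?_⟩
  have hn : (0 : ℝ) < n := by exact_mod_cast Nat.pos_of_ne_zero (NeZero.ne n)
  simp only [discMeasure, Measure.coe_finsetSum, Finset.sum_apply, Measure.smul_apply,
    measure_univ, smul_eq_mul, mul_one, Finset.sum_const, Finset.card_univ, Fintype.card_fin,
    nsmul_eq_mul]
  rw [← ENNReal.ofReal_natCast, ← ENNReal.ofReal_mul hn.le, mul_inv_cancel₀ hn.ne',
    ENNReal.ofReal_one]

/-- A bound on every slice over a finite probability space bounds the product measure. -/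
lemma prod_le_of_forall_slice {Ω Γ : Type*} [MeasurableSpace Ω] [MeasurableSpace Γ] [Fintype Γ]
    [MeasurableSingletonClass Γ] (μ : Measure Ω) [SigmaFinite μ] (ν : Measure Γ)
    [IsProbabilityMeasure ν] (S : Γ → Set Ω) {b : ENNReal} (h : ∀ c, μ (S c) ≤ b) :
    μ.prod ν {ω | ω.1 ∈ S ω.2} ≤ b := by
  have h1 : {ω : Ω × Γ | ω.1 ∈ S ω.2} = ⋃ c, S c ×ˢ {c} := by
    ext ω; simp
  calc μ.prod ν {ω | ω.1 ∈ S ω.2} ≤ ∑ c, μ.prod ν (S c ×ˢ {c}) := by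
        rw [h1]; exact measure_iUnion_fintype_le _ _
    _ ≤ ∑ c, b * ν {c} := by
        refine Finset.sum_le_sum fun c _ => ?_
        rw [Measure.prod_prod]
        gcongr
        exact h c
    _ = b := by
        rw [← Finset.mul_sum, sum_measure_singleton, Finset.coe_univ, measure_univ, mul_one]

/-- The union bound over rows, columns and sizes of `U` costs a factor `m * n * (m + 1)`, which the
tail at level `24 * log (2 * m * n / δ) / m` in at least `3 * m / 4` dimensions absorbs. -/
lemma union_bound_le {m n D : ℕ} (hm : 0 < m) (hn : 0 < n) (hD : 3 * (m : ℝ) / 4 ≤ D) {δ : ℝ}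
    (hδ : 0 < δ) (hδ1 : δ < 1) :
    (m * n * (m + 1) : ℝ) *
      (2 * Real.exp (-(24 * Real.log (2 * m * n / δ) / m * D / 2))) ≤ δ := by
  have hm1 : (1 : ℝ) ≤ m := by exact_mod_cast hm
  have hn1 : (1 : ℝ) ≤ n := by exact_mod_cast hn
  have hmn1 : (1 : ℝ) ≤ m * n := by nlinarith
  set q : ℝ := δ / (2 * m * n) with hq
  have hq0 : 0 < q := by positivity
  have hq1 : q ≤ 1 := by rw [hq, div_le_one (by positivity)]; nlinarith
  have hqδ : 2 * m * n * q = δ := by rw [hq]; field_simp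
  set L := Real.log (2 * m * n / δ) with hL
  have hLq : Real.exp (-L) = q := by
    rw [hL, Real.exp_neg, Real.exp_log (by positivity), hq, inv_div]
  have hL0 : 0 ≤ L := by
    have : Real.exp (-L) ≤ Real.exp 0 := by rw [hLq, Real.exp_zero]; exact hq1
    linarith [Real.exp_le_exp.1 this]
  have hexp : Real.exp (-(24 * L / m * D / 2)) ≤ q ^ 3 := by
    rw [← hLq, ← Real.exp_nat_mul]
    refine Real.exp_le_exp.2 ?_
    have h1 : 24 * L / m * D / 2 = 12 * L * (D / m) := by ring
    have h2 : (3 : ℝ) / 4 ≤ D / m := by rw [le_div_iff₀ (by positivity)]; linarith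
    rw [h1]
    push_cast
    nlinarith
  calc (m * n * (m + 1) : ℝ) * (2 * Real.exp (-(24 * L / m * D / 2)))
      ≤ (m * n * (2 * m * n)) * (2 * q ^ 3) := by
        gcongr
        nlinarith
    _ = (2 * m * n * q) ^ 2 * q := by ring
    _ ≤ δ := by
        rw [hqδ]
        nlinarith

/-- Lemma 4, eq. (6): for `M = C + R` with `rank(C) = r` and i.i.d. `N(0,σ²)`
noise, if `r ≤ d ≤ m/4` and `ln(2n/δ) ≤ m/64`, then with probability at least `1 - δ`,
simultaneously for every non-sampled column `m_j`,
`μ(P_{Û⊥} m_j) ≤ 3 r μ(r) + 24 ln(2mn/δ)`. -/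
theorem statement8 {m n r d : ℕ} (hmn : m ≤ n)
    (C : Matrix (Fin m) (Fin n) ℝ) (hrank : C.rank = r) (σ : NNReal)
    (Ubar : Matrix (Fin m) (Fin r) ℝ) (Vbar : Matrix (Fin n) (Fin r) ℝ)
    (hsvd : IsTopSVD C Ubar Vbar)
    (δ : ℝ) (hδ : 0 < δ)
    (hrd : r ≤ d) (hdm : (d : ℝ) ≤ (m : ℝ) / 4)
    (hln : Real.log (2 * n / δ) ≤ (m : ℝ) / 64) :
    1 - ENNReal.ofReal δ ≤
      ((gaussMeasure m n σ).prod
          (Measure.pi fun _ : Fin d => discMeasure fun _ : Fin n => (n : ℝ)⁻¹))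
        {ω | ∀ U : Matrix (Fin m)
            (Fin (min r (sampleA d (addNoise C ω.1) (fun _ => (n : ℝ)⁻¹) ω.2).rank)) ℝ,
          IsTopLeftSingular (sampleA d (addNoise C ω.1) (fun _ => (n : ℝ)⁻¹) ω.2) U →
          ∀ j : Fin n, (¬ ∃ t, ω.2 t = j) →
            vecIncoh ((1 - U * Uᵀ).mulVec fun i => addNoise C ω.1 i j) ≤
              3 * r * incoh Ubar Vbar + 24 * Real.log (2 * m * n / δ)} := by
  rcases le_or_gt 1 δ with hδ1 | hδ1
  · rw [tsub_eq_zero_of_le (ENNReal.one_le_ofReal.2 hδ1)]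
    exact zero_le
  rcases Nat.eq_zero_or_pos m with rfl | hm
  -- an empty column has incoherence `0`, and `log 0 = 0` on the right-hand side
  · have hd : d = 0 := by
      have : (d : ℝ) ≤ 0 := by simpa using hdm
      exact_mod_cast this.antisymm d.cast_nonneg
    subst hd
    obtain rfl : r = 0 := Nat.le_zero.1 hrd
    have huniv : ∀ G : Set ((Fin 0 → Fin n → ℝ) × (Fin 0 → Fin n)), G = Set.univ →
        1 - ENNReal.ofReal δ ≤ ((gaussMeasure 0 n σ).prod
          (Measure.pi fun _ : Fin 0 => discMeasure fun _ : Fin n => (n : ℝ)⁻¹)) G := by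
      rintro _ rfl
      rw [Measure.pi_of_empty, measure_univ]
      exact tsub_le_self
    refine huniv _ (Set.eq_univ_of_forall fun ω U _ j _ => ?_)
    simp [vecIncoh]
  have hn : 0 < n := hm.trans_le hmn
  have : NeZero n := ⟨hn.ne'⟩
  have hm0 : (0 : ℝ) < m := by exact_mod_cast hm
  have hrm : (r : ℝ) ≤ m / 4 := le_trans (by exact_mod_cast hrd) hdm
  have hrm' : r ≤ m := by
    have : (r : ℝ) ≤ m := by linarith
    exact_mod_cast this
  have hD : 3 * (m : ℝ) / 4 ≤ (m - r : ℕ) := by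
    rw [Nat.cast_sub hrm']; linarith
  choose F hF hFU hFC hflat using exists_flat_frame hrank hsvd
  set L := Real.log (2 * m * n / δ) with hL
  have hL0 : 0 ≤ L := by
    refine Real.log_nonneg ?_
    have hm1 : (1 : ℝ) ≤ m := by exact_mod_cast hm
    have hn1 : (1 : ℝ) ≤ n := by exact_mod_cast hn
    rw [one_le_div hδ]
    nlinarith
  have hs : 0 ≤ 24 * L / m := by positivity
  set p : Fin n → ℝ := fun _ => (n : ℝ)⁻¹ with hp
  set S : (Fin d → Fin n) → Set (Fin m → Fin n → ℝ) := fun c =>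
    ⋃ t : Fin m × Fin n × Fin (m + 1),
      badEvent C p c (F t.1) t.1 t.2.1 t.2.2 (24 * L / m) with hS
  set P := (gaussMeasure m n σ).prod (Measure.pi fun _ : Fin d => discMeasure p) with hP
  have hbad : P {ω | ω.1 ∈ S ω.2} ≤ ENNReal.ofReal δ := by
    refine prod_le_of_forall_slice _ _ S fun c => ?_
    refine (measure_iUnion_fintype_le _ _).trans ((Finset.sum_le_sum fun t _ =>
      gaussMeasure_badEvent_le p c (hF t.1) (hFC t.1) t.1 (hflat t.1) t.2.1 t.2.2 hs σ).trans ?_)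
    rw [Finset.sum_const, nsmul_eq_mul, ← ENNReal.ofReal_natCast, ← ENNReal.ofReal_mul (by positivity)]
    refine ENNReal.ofReal_le_ofReal ?_
    have := union_bound_le hm hn hD hδ hδ1
    simp only [Finset.card_univ, Fintype.card_prod, Fintype.card_fin]
    push_cast
    rwa [← mul_assoc (m : ℝ)]
  set G := {ω : (Fin m → Fin n → ℝ) × (Fin d → Fin n) | ∀ U : Matrix (Fin m)
      (Fin (min r (sampleA d (addNoise C ω.1) p ω.2).rank)) ℝ,
      IsTopLeftSingular (sampleA d (addNoise C ω.1) p ω.2) U →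
      ∀ j : Fin n, (¬ ∃ t, ω.2 t = j) →
        vecIncoh ((1 - U * Uᵀ).mulVec fun i => addNoise C ω.1 i j) ≤
          3 * r * incoh Ubar Vbar + 24 * L} with hG
  have hsub : Set.univ ⊆ G ∪ {ω | ω.1 ∈ S ω.2} := by
    intro ω _
    by_contra hcon
    rw [Set.mem_union, not_or] at hcon
    refine hcon.1 fun U hU j _ => ?_
    have hω : ∀ t : Fin m × Fin n × Fin (m + 1),
        ω.1 ∉ badEvent C p ω.2 (F t.1) t.1 t.2.1 t.2.2 (24 * L / m) :=
      fun t ht => hcon.2 (Set.mem_iUnion.2 ⟨t, ht⟩)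
    have hri : ∀ i, m * rowNormSq Ubar i ≤ r * incoh Ubar Vbar := mul_rowNormSq_le Ubar Vbar
    have hr0 : 0 ≤ r * incoh Ubar Vbar :=
      (mul_nonneg hm0.le (Finset.sum_nonneg fun _ _ => sq_nonneg _)).trans (hri ⟨0, hm⟩)
    refine vecIncoh_le _ (by nlinarith) fun i => ?_
    obtain ⟨B, hB⟩ := hU.exists_eq_mul (min_le_right _ _)
    have hnot := hω (i, j, ⟨min r (sampleA d (addNoise C ω.1) p ω.2).rank, by omega⟩)
    have hle : (F i *ᵥ ((F i)ᵀ *ᵥ resid (addNoise C ω.1) U j)) i ^ 2 ≤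
        24 * L / m * ∑ l, ((F i)ᵀ *ᵥ resid (addNoise C ω.1) U j) l ^ 2 := by
      refine not_lt.1 fun hlt => hnot ⟨Matrix.of.symm B, ?_⟩
      rw [Equiv.apply_symm_apply, ← hB]
      exact ⟨hU.isFrobMax, hlt⟩
    have hsq := sq_le_of_frame (hFU i) _ i hs hle
    have hx0 : 0 ≤ ∑ l, resid (addNoise C ω.1) U j l ^ 2 :=
      Finset.sum_nonneg fun _ _ => sq_nonneg _
    calc (m : ℝ) * resid (addNoise C ω.1) U j i ^ 2
        ≤ m * ((rowNormSq Ubar i + 24 * L / m) * ∑ l, resid (addNoise C ω.1) U j l ^ 2) := by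
          gcongr
      _ = (m * rowNormSq Ubar i + 24 * L) * ∑ l, resid (addNoise C ω.1) U j l ^ 2 := by
          field_simp
      _ ≤ (3 * r * incoh Ubar Vbar + 24 * L) * ∑ l, resid (addNoise C ω.1) U j l ^ 2 := by
          refine mul_le_mul_of_nonneg_right ?_ hx0
          have := hri i
          linarith
  rw [tsub_le_iff_right]
  calc (1 : ENNReal) = P Set.univ := measure_univ.symm
    _ ≤ P (G ∪ {ω | ω.1 ∈ S ω.2}) := measure_mono hsub
    _ ≤ P G + P {ω | ω.1 ∈ S ω.2} := measure_union_le _ _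
    _ ≤ P G + ENNReal.ofReal δ := by gcongr
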